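/- arXiv:2403.02986 — 9 statements merged into one kernel-verified Lean document; each statement's English description precedes it below -/
import Mathlib

section
/- Let α ∈ S_n be a quasi-diagram. Then every orbit of the permutation ζα on {1,…,n} contains 1 or an isolated point of α if and only if every orbit of the permutation αζ on {1,…,n} contains n or an isolated point of α. (In particular, regularity of α can be tested by either condition.) -/
/-- Let `α ∈ S_n` be a quasi-diagram (an involution of `Fin n`, 0-indexed, so
the point `1` is `⟨0, _⟩` and the point `n` is `⟨n-1, _⟩`; `ζ = finRotate n` is the cycle
`(1 2 ⋯ n)`).  Then every orbit of `ζα` contains `1` or an isolated point of `α` iff every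
orbit of `αζ` contains `n` or an isolated point of `α`. -/
theorem stmt_1 (n : ℕ) (hn : 0 < n) (α : Equiv.Perm (Fin n))
    (hα : ∀ i, α (α i) = i) :
    (∀ x : Fin n, ∃ y : Fin n,
        (finRotate n * α).SameCycle x y ∧ (y = ⟨0, hn⟩ ∨ α y = y)) ↔
      (∀ x : Fin n, ∃ y : Fin n,
        (α * finRotate n).SameCycle x y ∧ (y = ⟨n - 1, by omega⟩ ∨ α y = y)) := by
  have hsq : α * α = 1 := by ext i; simp [hα]
  have hinv : α⁻¹ = α := inv_eq_of_mul_eq_one_left hsq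
  have hrot : finRotate n ⟨n - 1, by omega⟩ = ⟨0, hn⟩ := by
    obtain ⟨m, rfl⟩ : ∃ m, n = m + 1 := ⟨n - 1, by omega⟩
    exact finRotate_last
  have key : ∀ x y, (α * finRotate n).SameCycle x y ↔
      (finRotate n * α).SameCycle (α x) (α y) := by
    intro x y
    have h := Equiv.Perm.sameCycle_conj (f := finRotate n * α) (g := α) (x := x) (y := y)
    have e : α * (finRotate n * α) * α⁻¹ = α * finRotate n := by group
    rw [e, hinv] at h
    exact h
  constructor
  · intro H x
    obtain ⟨y, hy, h | h⟩ := H (α x)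
    · refine ⟨⟨n - 1, by omega⟩, ?_, Or.inl rfl⟩
      rw [key]
      have h1 : (finRotate n * α) (α ⟨n - 1, by omega⟩) = y := by
        rw [Equiv.Perm.mul_apply, hα, hrot, h]
      rw [← h1] at hy
      exact Equiv.Perm.sameCycle_apply_right.mp hy
    · exact ⟨y, by rw [key, h]; exact hy, Or.inr h⟩
  · intro H x
    obtain ⟨y, hy, h | h⟩ := H (α x)
    · refine ⟨⟨0, hn⟩, ?_, Or.inl rfl⟩
      rw [key, hα] at hy
      have h1 : (finRotate n * α) (α y) = ⟨0, hn⟩ := by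
        rw [Equiv.Perm.mul_apply, hα, h, hrot]
      rw [← h1]
      exact Equiv.Perm.sameCycle_apply_right.mpr hy
    · rw [key, hα, h] at hy
      exact ⟨y, hy, Or.inr h⟩
end

section
/- Let α ∈ S_n be a regular quasi-diagram. Then: (a) for every j ∈ {1,…,n−1} there exists a smallest positive integer g_j such that (αζ)^{g_j}(j) = n or (αζ)^{g_j}(j) is an isolated point of α (set g_n = 0); (b) for every i ∈ {1,…,n} with i ≠ α(n) there exists a smallest positive integer d_i such that (ζα)^{d_i}(i) = α(n) or (ζα)^{d_i}(i) is an isolated point of α (set d_{α(n)} = 0); and (c) max{ g_j : j is an isolated point of α or j = α(1) } = max{ d_i : i is an isolated point of α or i = 1 }. -/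
/-- Let `α ∈ S_n` be a regular quasi-diagram (an involution of `Fin n`,
0-indexed: point `1` is `⟨0, _⟩`, point `n` is `⟨n-1, _⟩`; `ζ = finRotate n`; regular means
every orbit of `ζα` contains `1` or an isolated point of `α`).  Then:
(a) for every `j ≠ n` there is a smallest positive integer `G j` with `(αζ)^(G j) j = n` or
an isolated point of `α`, and `G n = 0`;
(b) for every `i ≠ α n` there is a smallest positive integer `D i` with `(ζα)^(D i) i = α n`
or an isolated point of `α`, and `D (α n) = 0`;
(c) `max { G j : j isolated or j = α 1 } = max { D i : i isolated or i = 1 }`. -/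
theorem stmt_4 (n : ℕ) (hn : 0 < n) (α : Equiv.Perm (Fin n))
    (hα : ∀ i, α (α i) = i)
    (hreg : ∀ x : Fin n, ∃ y : Fin n,
      (finRotate n * α).SameCycle x y ∧ (y = ⟨0, hn⟩ ∨ α y = y)) :
    ∃ G D : Fin n → ℕ,
      G ⟨n - 1, by omega⟩ = 0 ∧
      (∀ j : Fin n, j ≠ ⟨n - 1, by omega⟩ →
        0 < G j ∧
        (((α * finRotate n) ^ G j) j = ⟨n - 1, by omega⟩ ∨
          α (((α * finRotate n) ^ G j) j) = ((α * finRotate n) ^ G j) j) ∧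
        (∀ m : ℕ, 0 < m →
          (((α * finRotate n) ^ m) j = ⟨n - 1, by omega⟩ ∨
            α (((α * finRotate n) ^ m) j) = ((α * finRotate n) ^ m) j) →
          G j ≤ m)) ∧
      D (α ⟨n - 1, by omega⟩) = 0 ∧
      (∀ i : Fin n, i ≠ α ⟨n - 1, by omega⟩ →
        0 < D i ∧
        (((finRotate n * α) ^ D i) i = α ⟨n - 1, by omega⟩ ∨
          α (((finRotate n * α) ^ D i) i) = ((finRotate n * α) ^ D i) i) ∧
        (∀ m : ℕ, 0 < m →
          (((finRotate n * α) ^ m) i = α ⟨n - 1, by omega⟩ ∨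
            α (((finRotate n * α) ^ m) i) = ((finRotate n * α) ^ m) i) →
          D i ≤ m)) ∧
      (Finset.univ.filter fun j : Fin n => α j = j ∨ j = α ⟨0, hn⟩).sup G =
        (Finset.univ.filter fun i : Fin n => α i = i ∨ i = ⟨0, hn⟩).sup D := by
  classical
  generalize hL : (⟨n - 1, by omega⟩ : Fin n) = L
  have hrot : finRotate n L = ⟨0, hn⟩ := by
    subst hL
    obtain ⟨k, rfl⟩ : ∃ k, n = k + 1 := ⟨n - 1, by omega⟩
    exact finRotate_last
  have hconj : ∀ (m : ℕ) (x : Fin n),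
      ((α * finRotate n) ^ m) x = α (((finRotate n * α) ^ m) (α x)) := by
    intro m x
    induction m with
    | zero => simp [hα]
    | succ k ih =>
      rw [pow_succ', pow_succ', Equiv.Perm.mul_apply, ih]
      simp [Equiv.Perm.mul_apply]
  have hex : ∀ i : Fin n, ∃ m : ℕ, 0 < m ∧ (((finRotate n * α) ^ m) i = α L ∨
      α (((finRotate n * α) ^ m) i) = ((finRotate n * α) ^ m) i) := by
    intro i
    obtain ⟨y, hy, h⟩ := hreg i
    rcases h with h | h
    · have h1 : (finRotate n * α) (α L) = y := by
        rw [Equiv.Perm.mul_apply, hα, hrot, h]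
      have h2 : (finRotate n * α).SameCycle i (α L) := by
        rw [← h1] at hy
        exact Equiv.Perm.sameCycle_apply_right.mp hy
      obtain ⟨m, hm, -, hm'⟩ := h2.exists_pow_eq''
      exact ⟨m, hm, Or.inl hm'⟩
    · obtain ⟨m, hm, -, hm'⟩ := hy.exists_pow_eq''
      exact ⟨m, hm, Or.inr (by rw [hm', h])⟩
  let D : Fin n → ℕ := fun i => if i = α L then 0 else Nat.find (hex i)
  have hD : ∀ i : Fin n, i ≠ α L →
        0 < D i ∧
        (((finRotate n * α) ^ D i) i = α L ∨
          α (((finRotate n * α) ^ D i) i) = ((finRotate n * α) ^ D i) i) ∧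
        (∀ m : ℕ, 0 < m →
          (((finRotate n * α) ^ m) i = α L ∨
            α (((finRotate n * α) ^ m) i) = ((finRotate n * α) ^ m) i) →
          D i ≤ m) := by
    intro i hi
    have e : D i = Nat.find (hex i) := if_neg hi
    rw [e]
    exact ⟨(Nat.find_spec (hex i)).1, (Nat.find_spec (hex i)).2,
      fun m h1 h2 => Nat.find_min' (hex i) ⟨h1, h2⟩⟩
  have hcond : ∀ (m : ℕ) (j : Fin n),
      (((α * finRotate n) ^ m) j = L ∨
        α (((α * finRotate n) ^ m) j) = ((α * finRotate n) ^ m) j) ↔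
      (((finRotate n * α) ^ m) (α j) = α L ∨
        α (((finRotate n * α) ^ m) (α j)) = ((finRotate n * α) ^ m) (α j)) := by
    intro m j
    rw [hconj, hα]
    refine or_congr ⟨fun h => ?_, fun h => ?_⟩ eq_comm
    · rw [← h, hα]
    · rw [h, hα]
  refine ⟨fun j => D (α j), D, if_pos rfl, ?_, if_pos rfl, hD, ?_⟩
  · intro j hj
    obtain ⟨h1, h2, h3⟩ := hD (α j) (fun h => hj (α.injective h))
    exact ⟨h1, (hcond _ _).mpr h2, fun m hm h => h3 m hm ((hcond _ _).mp h)⟩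
  · apply le_antisymm
    · refine Finset.sup_le fun j hj => ?_
      refine Finset.le_sup (f := D) ?_
      simp only [Finset.mem_filter, Finset.mem_univ, true_and] at hj ⊢
      rcases hj with h | h
      · left; rw [h, h]
      · right; rw [h, hα]
    · refine Finset.sup_le fun i hi => ?_
      have : D i = (fun j => D (α j)) (α i) := by simp only [hα]
      rw [this]
      refine Finset.le_sup (f := fun j => D (α j)) ?_
      simp only [Finset.mem_filter, Finset.mem_univ, true_and] at hi ⊢
      rcases hi with h | h
      · left; rw [h, h]
      · right; rw [h]
end

section
/- Let α ∈ S_n be a quasi-diagram and let γ ∈ S_n be the reflection γ(i) = n+1−i. Then α is regular if and only if the quasi-diagram γαγ^{−1} is regular. -/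
theorem rot_rev_rot (n : ℕ) (i : Fin n) :
    finRotate n (Fin.rev (finRotate n i)) = Fin.rev i := by
  cases n with
  | zero => exact i.elim0
  | succ m =>
    have h : ∀ j : Fin (m + 1), Fin.rev j = Fin.last m - j := fun j => (Fin.last_sub j).symm
    rw [finRotate_apply, finRotate_apply, h, h]
    abel

theorem rot_rev_zero (n : ℕ) (hn : 0 < n) :
    Fin.rev ((finRotate n)⁻¹ (⟨0, hn⟩ : Fin n)) = ⟨0, hn⟩ := by
  cases n with
  | zero => omega
  | succ m =>
    have h : (finRotate (m + 1))⁻¹ (⟨0, hn⟩ : Fin (m + 1)) = Fin.last m := by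
      rw [Equiv.Perm.inv_eq_iff_eq, finRotate_last]
      rfl
    rw [h, Fin.rev_last]
    rfl

theorem regular_rev (n : ℕ) (hn : 0 < n) (α : Equiv.Perm (Fin n))
    (hα : ∀ i, α (α i) = i)
    (H : ∀ x : Fin n, ∃ y : Fin n,
        (finRotate n * α).SameCycle x y ∧ (y = ⟨0, hn⟩ ∨ α y = y)) :
      (∀ x : Fin n, ∃ y : Fin n,
        (finRotate n * (Fin.revPerm * α * Fin.revPerm⁻¹)).SameCycle x y ∧
          (y = ⟨0, hn⟩ ∨
            (Fin.revPerm * α * Fin.revPerm⁻¹ : Equiv.Perm (Fin n)) y = y)) := by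
  have hrinv : (Fin.revPerm⁻¹ : Equiv.Perm (Fin n)) = Fin.revPerm := rfl
  have hainv : α⁻¹ = α := by
    ext i
    rw [Equiv.Perm.inv_eq_iff_eq.2 (hα i).symm]
  have key : (Fin.revPerm * α) * (finRotate n * α) * (Fin.revPerm * α)⁻¹
      = (finRotate n * (Fin.revPerm * α * Fin.revPerm⁻¹))⁻¹ := by
    rw [eq_inv_iff_mul_eq_one, mul_inv_rev, hrinv, hainv]
    ext i
    simp only [hα, rot_rev_rot, Equiv.Perm.mul_apply, Fin.revPerm_apply, Fin.rev_rev,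
      Equiv.Perm.one_apply]
  intro x
  set ψ : Equiv.Perm (Fin n) := Fin.revPerm * α with hψ
  obtain ⟨y, hy, hc⟩ := H (ψ⁻¹ x)
  have tr : ∀ z, (finRotate n * α).SameCycle (ψ⁻¹ x) z →
      (finRotate n * (ψ * Fin.revPerm⁻¹)).SameCycle x (ψ z) := by
    intro z hz
    rw [← Equiv.Perm.sameCycle_inv, ← key, Equiv.Perm.sameCycle_conj]
    simpa using hz
  rcases hc with rfl | hc
  · refine ⟨_, tr _ (Equiv.Perm.SameCycle.trans hy ⟨-1, by rw [zpow_neg_one]⟩), Or.inl ?_⟩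
    rw [mul_inv_rev, hainv]
    simp only [hψ, Equiv.Perm.mul_apply, hα, Fin.revPerm_apply]
    exact rot_rev_zero n hn
  · refine ⟨_, tr _ hy, Or.inr ?_⟩
    simp [hψ, hrinv, Equiv.Perm.mul_apply, hc]

/-- Let `α ∈ S_n` be a quasi-diagram (an involution of `Fin n`, 0-indexed:
point `1` is `⟨0, _⟩`; `ζ = finRotate n`), and let `γ` be the reflection `γ(i) = n+1-i`
(0-indexed: `Fin.revPerm`, `j ↦ n-1-j`).  Then `α` is regular (every orbit of `ζα` contains
`1` or an isolated point of `α`) iff `γαγ⁻¹` is regular. -/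
theorem stmt_5 (n : ℕ) (hn : 0 < n) (α : Equiv.Perm (Fin n))
    (hα : ∀ i, α (α i) = i) :
    (∀ x : Fin n, ∃ y : Fin n,
        (finRotate n * α).SameCycle x y ∧ (y = ⟨0, hn⟩ ∨ α y = y)) ↔
      (∀ x : Fin n, ∃ y : Fin n,
        (finRotate n * (Fin.revPerm * α * Fin.revPerm⁻¹)).SameCycle x y ∧
          (y = ⟨0, hn⟩ ∨
            (Fin.revPerm * α * Fin.revPerm⁻¹ : Equiv.Perm (Fin n)) y = y)) := by
  refine ⟨regular_rev n hn α hα, fun H => ?_⟩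
  have hrinv : (Fin.revPerm⁻¹ : Equiv.Perm (Fin n)) = Fin.revPerm := rfl
  have h := regular_rev n hn (Fin.revPerm * α * Fin.revPerm⁻¹)
    (by intro i; simp [hrinv, Equiv.Perm.mul_apply, hα]) H
  have e : (Fin.revPerm * (Fin.revPerm * α * Fin.revPerm⁻¹) * Fin.revPerm⁻¹
      : Equiv.Perm (Fin n)) = α := by
    ext i
    simp [hrinv, Equiv.Perm.mul_apply]
  rw [e] at h
  exact h
end

section
/- Let α ∈ S_n be a quasi-diagram. Then α is rotatably regular if and only if either α is maximal, or every orbit of ζα on {1,…,n} contains at least one isolated point of α. -/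
/-- `β` is regular with respect to the distinguished point `p` (the point "1"): every orbit of
`ζβ` contains `p` or an isolated point of `β`. -/
def RegularAt {n : ℕ} (β : Equiv.Perm (Fin n)) (p : Fin n) : Prop :=
  ∀ x : Fin n, ∃ y : Fin n, (finRotate n * β).SameCycle x y ∧ (y = p ∨ β y = y)

theorem rot_trans_aux (n : ℕ) (x y : Fin n) : ∃ l : ℤ, (finRotate n ^ l) x = y := by
  match n, x, y with
  | 0, x, _ => exact x.elim0
  | 1, x, y => exact ⟨0, Subsingleton.elim _ _⟩
  | n + 2, x, y =>
    have hs : ∀ z : Fin (n + 2), finRotate (n + 2) z ≠ z := by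
      intro z hz
      have : z ∈ (finRotate (n + 2)).support := by
        rw [support_finRotate]; exact Finset.mem_univ z
      exact (Equiv.Perm.mem_support.mp this) hz
    exact isCycle_finRotate.sameCycle (hs x) (hs y)

theorem regular_conj_aux {n : ℕ} (α g : Equiv.Perm (Fin n)) (hg : Commute g (finRotate n))
    (p : Fin n) : RegularAt (g * α * g⁻¹) p ↔ RegularAt α (g⁻¹ p) := by
  have e : finRotate n * (g * α * g⁻¹) = g * (finRotate n * α) * g⁻¹ := by
    rw [← mul_assoc, ← mul_assoc, ← hg.eq]; simp only [mul_assoc]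
  unfold RegularAt
  rw [e]
  simp only [Equiv.Perm.sameCycle_conj]
  constructor
  · intro h x
    obtain ⟨y, h1, h2⟩ := h (g x)
    refine ⟨g⁻¹ y, by simpa using h1, ?_⟩
    rcases h2 with h2 | h2
    · left; rw [h2]
    · right
      rw [Equiv.Perm.eq_inv_iff_eq]
      simpa using h2
  · intro h x
    obtain ⟨y, h1, h2⟩ := h (g⁻¹ x)
    refine ⟨g y, by simpa using h1, ?_⟩
    rcases h2 with h2 | h2
    · left; rw [h2]; simp
    · right
      simp [h2]

/-- Let `α ∈ S_n` be a quasi-diagram (involution of `Fin n`, 0-indexed: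
point `1` is `⟨0, _⟩`; `ζ = finRotate n`).  Then `α` is rotatably regular (every rotation
`ζ^l α ζ^(-l)`, `l ∈ ℤ`, is regular) iff either `α` is maximal (`ζα` has exactly one orbit)
or every orbit of `ζα` contains at least one isolated point of `α`. -/
theorem stmt_6 (n : ℕ) (hn : 0 < n) (α : Equiv.Perm (Fin n))
    (hα : ∀ i, α (α i) = i) :
    (∀ l : ℤ, RegularAt (finRotate n ^ l * α * finRotate n ^ (-l)) ⟨0, hn⟩) ↔
      ((∀ x y : Fin n, (finRotate n * α).SameCycle x y) ∨
        (∀ x : Fin n, ∃ y : Fin n, (finRotate n * α).SameCycle x y ∧ α y = y)) := by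
  have key : (∀ l : ℤ, RegularAt (finRotate n ^ l * α * finRotate n ^ (-l)) ⟨0, hn⟩) ↔
      ∀ p, RegularAt α p := by
    have h1 : ∀ l : ℤ, RegularAt (finRotate n ^ l * α * finRotate n ^ (-l)) ⟨0, hn⟩ ↔
        RegularAt α ((finRotate n ^ (-l)) ⟨0, hn⟩) := by
      intro l
      rw [zpow_neg]
      exact regular_conj_aux α _ ((Commute.refl _).zpow_left l) _
    constructor
    · intro h p
      obtain ⟨l, hl⟩ := rot_trans_aux n ⟨0, hn⟩ p
      have := (h1 (-l)).1 (h (-l))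
      rwa [neg_neg, hl] at this
    · intro h l
      exact (h1 l).2 (h _)
  rw [key]
  constructor
  · intro h
    by_contra hc
    rw [not_or] at hc
    obtain ⟨hm, hi⟩ := hc
    apply hi
    intro x
    by_contra hx
    apply hm
    have hall : ∀ p, (finRotate n * α).SameCycle x p := by
      intro p
      obtain ⟨y, hy, rfl | h2⟩ := h p x
      · exact hy
      · exact absurd ⟨y, hy, h2⟩ hx
    intro a b
    exact (hall a).symm.trans (hall b)
  · rintro (h | h) p x
    · exact ⟨p, h x p, Or.inl rfl⟩
    · obtain ⟨y, h1, h2⟩ := h x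
      exact ⟨y, h1, Or.inr h2⟩
end

section
/- Let α ∈ S_n be a quasi-diagram. Then gαg^{−1} is regular for every g ∈ D_n if and only if α is rotatably regular. Consequently, if α is rotatably regular then gαg^{−1} is rotatably regular for every g ∈ D_n (the conjugation action of D_n restricts to the set of rotatably regular quasi-diagrams). -/
/-- `β` is rotatably regular: every rotation `ζ^l β ζ^(-l)` (`l ∈ ℤ`) is regular. -/
def RotatablyRegularAt {n : ℕ} (β : Equiv.Perm (Fin n)) (p : Fin n) : Prop :=
  ∀ l : ℤ, RegularAt (finRotate n ^ l * β * finRotate n ^ (-l)) p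

theorem regularAt_transfer {n : ℕ} (α β f : Equiv.Perm (Fin n))
    (h1 : ∀ x y, (finRotate n * β).SameCycle (f x) (f y) ↔ (finRotate n * α).SameCycle x y)
    (h2 : ∀ y, β (f y) = f y ↔ α y = y) (q : Fin n) :
    RegularAt β (f q) ↔ RegularAt α q := by
  constructor
  · intro h x
    obtain ⟨y, hy, hy'⟩ := h (f x)
    obtain ⟨y, rfl⟩ := f.surjective y
    exact ⟨y, (h1 x y).1 hy, hy'.imp (fun h => f.injective h) (h2 y).1⟩
  · intro h x
    obtain ⟨x, rfl⟩ := f.surjective x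
    obtain ⟨y, hy, hy'⟩ := h x
    exact ⟨f y, (h1 x y).2 hy, hy'.imp (fun h => congrArg f h) (h2 y).2⟩

theorem sameCycle_conj_apply {n : ℕ} (a b f : Equiv.Perm (Fin n)) (h : b = f * a * f⁻¹)
    (x y : Fin n) : b.SameCycle (f x) (f y) ↔ a.SameCycle x y := by
  subst h
  simp [Equiv.Perm.sameCycle_conj]

theorem regularAt_rot {n : ℕ} (α : Equiv.Perm (Fin n)) (l : ℤ) (q : Fin n) :
    RegularAt (finRotate n ^ l * α * finRotate n ^ (-l)) ((finRotate n ^ l) q) ↔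
      RegularAt α q := by
  apply regularAt_transfer
  · apply sameCycle_conj_apply
    rw [zpow_neg]
    simp only [← mul_assoc]
    rw [(Commute.self_zpow (finRotate n) l).eq]
  · intro y
    simp [zpow_neg]

theorem rev_conj_rot (n : ℕ) :
    (finRotate n) * Fin.revPerm * (finRotate n) = (Fin.revPerm : Equiv.Perm (Fin n)) := by
  cases n with
  | zero => ext x; exact x.elim0
  | succ n =>
    apply Equiv.ext
    intro x
    simp only [Equiv.Perm.mul_apply, Fin.revPerm_apply, finRotate_apply]
    rw [Fin.rev_add]
    simp

theorem regularAt_rev {n : ℕ} (α : Equiv.Perm (Fin n)) (hα : ∀ i, α (α i) = i) (q : Fin n) :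
    RegularAt (Fin.revPerm * α * Fin.revPerm⁻¹) (((Fin.revPerm : Equiv.Perm (Fin n)) * α) q) ↔ RegularAt α q := by
  have ha : α * α = 1 := Equiv.ext hα
  have ha' : α⁻¹ = α := inv_eq_of_mul_eq_one_left ha
  apply regularAt_transfer
  · intro x y
    rw [← Equiv.Perm.sameCycle_inv (f := finRotate n * α)]
    apply sameCycle_conj_apply
    have h := rev_conj_rot n
    have h' : finRotate n * Fin.revPerm = Fin.revPerm * (finRotate n)⁻¹ :=
      eq_mul_inv_of_mul_eq h
    rw [mul_inv_rev, mul_inv_rev, ha']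
    calc finRotate n * (Fin.revPerm * α * Fin.revPerm⁻¹)
        = (finRotate n * Fin.revPerm) * α * Fin.revPerm⁻¹ := by group
      _ = Fin.revPerm * (α * α) * (finRotate n)⁻¹ * α * Fin.revPerm⁻¹ := by
          rw [h', ha, mul_one]
      _ = _ := by simp only [mul_assoc]
  · intro y
    simp only [Equiv.Perm.mul_apply, Equiv.Perm.inv_eq_iff_eq, EmbeddingLike.apply_eq_iff_eq]

open scoped Fin.CommRing in
theorem rot_trans {n : ℕ} (p q : Fin n) : ∃ l : ℤ, (finRotate n ^ l) p = q := by
  cases n with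
  | zero => exact p.elim0
  | succ n =>
    have key : ∀ k : ℕ, ∀ x : Fin (n + 1), (finRotate (n+1) ^ k) x = x + (k : Fin (n+1)) := by
      intro k
      induction k with
      | zero => intro x; simp
      | succ k ih =>
        intro x
        rw [pow_succ', Equiv.Perm.mul_apply, ih, finRotate_apply]
        push_cast
        rw [add_assoc]
    refine ⟨((q - p : Fin (n+1)) : ℕ), ?_⟩
    rw [zpow_natCast, key]
    simp

theorem rotReg_iff {n : ℕ} (α : Equiv.Perm (Fin n)) (p : Fin n) :
    RotatablyRegularAt α p ↔ ∀ q, RegularAt α q := by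
  constructor
  · intro h q
    obtain ⟨l, rfl⟩ := rot_trans q p
    exact (regularAt_rot α l q).1 (h l)
  · intro h l
    obtain ⟨q, rfl⟩ := (finRotate n ^ l).surjective p
    exact (regularAt_rot α l q).2 (h q)

theorem all_conj {n : ℕ} (g : Equiv.Perm (Fin n))
    (hg : g ∈ Subgroup.closure {finRotate n, Fin.revPerm}) :
    ∀ α : Equiv.Perm (Fin n), (∀ i, α (α i) = i) →
      ((∀ q, RegularAt (g * α * g⁻¹) q) ↔ ∀ q, RegularAt α q) := by
  induction hg using Subgroup.closure_induction with
  | mem x hx =>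
    intro α hα
    rcases hx with rfl | rfl
    · rw [← (finRotate n).forall_congr_right]
      refine forall_congr' fun q => ?_
      simpa using regularAt_rot α 1 q
    · rw [← ((Fin.revPerm : Equiv.Perm (Fin n)) * α).forall_congr_right]
      exact forall_congr' fun q => regularAt_rev α hα q
  | one => intro α _; simp
  | mul x y _ _ hx hy =>
    intro α hα
    rw [← hy α hα, ← hx (y * α * y⁻¹) (by intro i; simp [hα])]
    simp only [mul_inv_rev, mul_assoc]
  | inv x _ hx =>
    intro α hα
    rw [← hx (x⁻¹ * α * x⁻¹⁻¹) (by intro i; simp [hα])]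
    simp [mul_assoc]

/-- Let `α ∈ S_n` be a quasi-diagram (involution of `Fin n`, 0-indexed:
point `1` is `⟨0, _⟩`; `ζ = finRotate n`; `γ = Fin.revPerm` is the reflection `i ↦ n+1-i`,
and `D_n` is the dihedral subgroup of `S_n` generated by `ζ` and `γ`).  Then `gαg⁻¹` is
regular for every `g ∈ D_n` iff `α` is rotatably regular.  Consequently, if `α` is rotatably
regular then `gαg⁻¹` is rotatably regular for every `g ∈ D_n`. -/
theorem stmt_7 (n : ℕ) (hn : 0 < n) (α : Equiv.Perm (Fin n))
    (hα : ∀ i, α (α i) = i) :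
    ((∀ g ∈ Subgroup.closure {finRotate n, Fin.revPerm},
        RegularAt (g * α * g⁻¹) ⟨0, hn⟩) ↔
      RotatablyRegularAt α ⟨0, hn⟩) ∧
    (RotatablyRegularAt α ⟨0, hn⟩ →
      ∀ g ∈ Subgroup.closure {finRotate n, Fin.revPerm},
        RotatablyRegularAt (g * α * g⁻¹) ⟨0, hn⟩) := by
  refine ⟨⟨fun h l => ?_, fun h g hg => ?_⟩, fun h g hg => ?_⟩
  · have := h (finRotate n ^ l)
      (Subgroup.zpow_mem _ (Subgroup.subset_closure (by simp)) l)
    rwa [← zpow_neg] at this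
  · exact (all_conj g hg α hα).2 ((rotReg_iff α _).1 h) _
  · exact (rotReg_iff _ _).2 ((all_conj g hg α hα).2 ((rotReg_iff α _).1 h))
end

section
/- Let α ∈ S_n be a quasi-diagram, let i ∈ {1,…,n+1}, and let ι_i(α) ∈ S_{n+1} be the i-expansion of α. (1) If i = n+1, then the orbits of ζ_{n+1}·ι_{n+1}(α) on {1,…,n+1} are exactly the orbits O of ζ_n·α with 1 ∉ O, together with O₀ ∪ {n+1}, where O₀ is the orbit of ζ_n·α containing 1. (2) If i ≤ n, then the orbits of ζ_{n+1}·ι_i(α) on {1,…,n+1} are exactly the sets ϑ_{i,n+1}(O) for the orbits O of ζ_n·α with i ∉ O, together with ϑ_{i,n+1}(O₀) ∪ {i}, where O₀ is the orbit of ζ_n·α containing i. In particular, ι_i(α) has the same number of faces as α. -/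
/-- The cycle `ϑ_{i,n+1} = (i, i+1, …, n+1)` of `S_{n+1}`; 0-indexed on `Fin (n+1)` it is the
cycle `(a, a+1, …, Fin.last n)` where `a` corresponds to `i`. -/
def vartheta {n : ℕ} (a : Fin (n + 1)) : Equiv.Perm (Fin (n + 1)) :=
  Fin.revPerm * (Fin.cycleRange a.rev)⁻¹ * Fin.revPerm

/-- A permutation of `Fin n` regarded as a permutation of `Fin (n+1)` fixing the last point. -/
def castPerm {n : ℕ} (α : Equiv.Perm (Fin n)) : Equiv.Perm (Fin (n + 1)) :=
  α.viaFintypeEmbedding Fin.castSuccEmb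

/-- The `i`-expansion `ι_i(α) = ϑ_{i,n+1} α ϑ_{i,n+1}⁻¹` of a quasi-diagram `α ∈ S_n`. -/
def expand {n : ℕ} (a : Fin (n + 1)) (α : Equiv.Perm (Fin n)) : Equiv.Perm (Fin (n + 1)) :=
  vartheta a * castPerm α * (vartheta a)⁻¹

/-- `ω` is an orbit of the permutation `σ`. -/
def IsOrbit {m : ℕ} (σ : Equiv.Perm (Fin m)) (ω : Set (Fin m)) : Prop :=
  ∃ x : Fin m, ω = {y | σ.SameCycle x y}

theorem aux_inv {A : Type*} (σ : Equiv.Perm A) (x : A) : σ⁻¹ (σ x) = x :=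
  σ.symm_apply_apply x

theorem aux_vartheta {n : ℕ} (a : Fin (n + 1)) (x : Fin n) :
    vartheta a x.castSucc = a.succAbove x := by
  have : a.rev.cycleRange (a.succAbove x).rev = x.castSucc.rev := by
    rw [Fin.rev_succAbove, Fin.cycleRange_succAbove, Fin.rev_castSucc]
  simp only [vartheta, Equiv.Perm.mul_apply, Fin.revPerm_apply]
  rw [← this, aux_inv, Fin.rev_rev]

theorem aux_vartheta_last {n : ℕ} (a : Fin (n + 1)) :
    vartheta a (Fin.last n) = a := by
  have : a.rev.cycleRange a.rev = (Fin.last n).rev := by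
    rw [Fin.cycleRange_self, Fin.rev_last]
  simp only [vartheta, Equiv.Perm.mul_apply, Fin.revPerm_apply]
  rw [← this, aux_inv, Fin.rev_rev]

theorem aux_cast {n : ℕ} (α : Equiv.Perm (Fin n)) (x : Fin n) :
    castPerm α x.castSucc = (α x).castSucc := by
  exact Equiv.Perm.viaFintypeEmbedding_apply_image α Fin.castSuccEmb x

theorem aux_cast_last {n : ℕ} (α : Equiv.Perm (Fin n)) :
    castPerm α (Fin.last n) = Fin.last n := by
  apply Equiv.Perm.viaFintypeEmbedding_apply_notMem_range
  rintro ⟨x, hx⟩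
  exact Fin.castSucc_ne_last x hx

theorem aux_expand {n : ℕ} (a : Fin (n + 1)) (α : Equiv.Perm (Fin n)) (x : Fin n) :
    expand a α (a.succAbove x) = a.succAbove (α x) := by
  simp only [expand, Equiv.Perm.mul_apply]
  rw [← aux_vartheta, aux_inv, aux_cast, aux_vartheta]

theorem aux_expand_self {n : ℕ} (a : Fin (n + 1)) (α : Equiv.Perm (Fin n)) :
    expand a α a = a := by
  have : (vartheta a)⁻¹ a = Fin.last n := by
    rw [Equiv.Perm.inv_eq_iff_eq, aux_vartheta_last]
  simp only [expand, Equiv.Perm.mul_apply]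
  rw [this, aux_cast_last, aux_vartheta_last]

theorem aux_same {A B : Type*} [Finite A] [Finite B] (σ : Equiv.Perm A) (τ : Equiv.Perm B)
    (p : A → B) (q : B → A) (b : B) (c : A) (hqp : ∀ x, q (p x) = x) (hqb : q b = c)
    (hB : ∀ z, z = b ∨ ∃ x, z = p x) (hb : τ b = p c)
    (hc : ∀ x, σ x = c → τ (p x) = b) (hnc : ∀ x, σ x ≠ c → τ (p x) = p (σ x)) (z w : B) :
    τ.SameCycle z w ↔ σ.SameCycle (q z) (q w) := by
  have step : ∀ z, σ.SameCycle (q z) (q (τ z)) := by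
    intro z
    rcases hB z with rfl | ⟨x, rfl⟩
    · rw [hb, hqp, hqb]
    · by_cases h : σ x = c
      · rw [hc x h, hqb, hqp, ← h]
        exact ⟨1, by simp⟩
      · rw [hnc x h, hqp, hqp]
        exact ⟨1, by simp⟩
  have step2 : ∀ x, τ.SameCycle (p x) (p (σ x)) := by
    intro x
    by_cases h : σ x = c
    · refine ⟨2, ?_⟩
      rw [h, ← hb, ← hc x h]
      rfl
    · exact ⟨1, by simp [hnc x h]⟩
  have hz : ∀ z, τ.SameCycle z (p (q z)) := by
    intro z
    rcases hB z with rfl | ⟨x, rfl⟩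
    · exact ⟨1, by simp [hb, hqb]⟩
    · rw [hqp]
  constructor
  · intro h
    obtain ⟨k, -, hk⟩ := h.exists_pow_eq'
    rw [← hk]
    clear hk
    induction k with
    | zero => simp; exact Equiv.Perm.SameCycle.refl _ _
    | succ k ih =>
      rw [pow_succ', Equiv.Perm.mul_apply]
      exact ih.trans (step _)
  · intro h
    refine (hz z).trans (Equiv.Perm.SameCycle.trans ?_ (hz w).symm)
    obtain ⟨k, -, hk⟩ := h.exists_pow_eq'
    rw [← hk]
    clear hk
    induction k with
    | zero => simp; exact Equiv.Perm.SameCycle.refl _ _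
    | succ k ih =>
      rw [pow_succ', Equiv.Perm.mul_apply]
      exact ih.trans (step2 _)

theorem aux_orbits {n m : ℕ} (σ : Equiv.Perm (Fin n)) (τ : Equiv.Perm (Fin m))
    (p : Fin n → Fin m) (b : Fin m) (c : Fin n) (hp : Function.Injective p)
    (hpb : ∀ x, p x ≠ b)
    (hB : ∀ z, z = b ∨ ∃ x, z = p x) (hb : τ b = p c)
    (hc : ∀ x, σ x = c → τ (p x) = b) (hnc : ∀ x, σ x ≠ c → τ (p x) = p (σ x)) :
    (∀ ω : Set (Fin m), IsOrbit τ ω ↔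
      ((∃ O : Set (Fin n), IsOrbit σ O ∧ c ∉ O ∧ ω = p '' O) ∨
        ω = p '' {y | σ.SameCycle c y} ∪ {b})) ∧
    {ω : Set (Fin m) | IsOrbit τ ω}.ncard = {O : Set (Fin n) | IsOrbit σ O}.ncard := by
  classical
  obtain ⟨q, hqp, hqb⟩ : ∃ q : Fin m → Fin n, (∀ x, q (p x) = x) ∧ q b = c := by
    have : Nonempty (Fin n) := ⟨c⟩
    refine ⟨Function.update (Function.invFun p) b c, fun x => ?_, by simp⟩
    rw [Function.update_of_ne (hpb x), Function.leftInverse_invFun hp x]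
  have key := aux_same σ τ p q b c hqp hqb hB hb hc hnc
  have hq : Function.Surjective q := fun x => ⟨p x, hqp x⟩
  have pre : ∀ ω, IsOrbit τ ω ↔ ∃ O, IsOrbit σ O ∧ q ⁻¹' O = ω := by
    intro ω
    constructor
    · rintro ⟨z, rfl⟩
      exact ⟨_, ⟨q z, rfl⟩, by ext w; simp [key]⟩
    · rintro ⟨_, ⟨x, rfl⟩, rfl⟩
      exact ⟨p x, by ext w; simp [key, hqp]⟩
  have pre1 : ∀ O : Set (Fin n), c ∉ O → q ⁻¹' O = p '' O := by
    intro O hO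
    ext z
    rcases hB z with rfl | ⟨x, rfl⟩
    · simp [hqb, hO, hpb]
    · simp [hqp, hp.eq_iff]
  have pre2 : ∀ O : Set (Fin n), c ∈ O → q ⁻¹' O = p '' O ∪ {b} := by
    intro O hO
    ext z
    rcases hB z with rfl | ⟨x, rfl⟩
    · simp [hqb, hO]
    · simp [hqp, hp.eq_iff, hpb]
  refine ⟨fun ω => ?_, ?_⟩
  · rw [pre]
    constructor
    · rintro ⟨O, hO, rfl⟩
      by_cases h : c ∈ O
      · right
        rw [pre2 O h]
        obtain ⟨x, rfl⟩ := hO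
        have hx : σ.SameCycle x c := h
        congr 2
        ext y
        exact ⟨fun h => hx.symm.trans h, fun h => hx.trans h⟩
      · exact Or.inl ⟨O, hO, h, pre1 O h⟩
    · rintro (⟨O, hO, h, rfl⟩ | rfl)
      · exact ⟨O, hO, pre1 O h⟩
      · exact ⟨_, ⟨c, rfl⟩, pre2 _ (Equiv.Perm.SameCycle.refl _ _)⟩
  · have : {ω : Set (Fin m) | IsOrbit τ ω} = (fun O => q ⁻¹' O) '' {O | IsOrbit σ O} := by
      ext ω
      exact pre ω
    rw [this, Set.ncard_image_of_injective _ hq.preimage_injective]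

theorem aux_rot (k : ℕ) (x : Fin k) :
    ((finRotate k x : Fin k) : ℕ) = if (x : ℕ) + 1 = k then 0 else (x : ℕ) + 1 := by
  cases k with
  | zero => exact x.elim0
  | succ k =>
    rw [coe_finRotate]
    simp [Fin.ext_iff]

theorem aux_succAbove {n : ℕ} (a : Fin (n + 1)) (x : Fin n) :
    ((a.succAbove x : Fin (n + 1)) : ℕ) = if (x : ℕ) < a then (x : ℕ) else (x : ℕ) + 1 := by
  simp only [Fin.succAbove, Fin.lt_def, Fin.val_castSucc]
  split_ifs <;> simp

theorem aux_main {n : ℕ} (α : Equiv.Perm (Fin n)) (a : Fin (n + 1)) (c : Fin n)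
    (hca : ((a : ℕ) = n ∧ (c : ℕ) = 0) ∨ (c : ℕ) = a) :
    (∀ ω : Set (Fin (n + 1)), IsOrbit (finRotate (n + 1) * expand a α) ω ↔
      ((∃ O : Set (Fin n), IsOrbit (finRotate n * α) O ∧ c ∉ O ∧ ω = a.succAbove '' O) ∨
        ω = a.succAbove '' {y | (finRotate n * α).SameCycle c y} ∪ {a})) ∧
    {ω : Set (Fin (n + 1)) | IsOrbit (finRotate (n + 1) * expand a α) ω}.ncard =
      {O : Set (Fin n) | IsOrbit (finRotate n * α) O}.ncard := by
  apply aux_orbits _ _ a.succAbove a c Fin.succAbove_right_injective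
    (fun x => Fin.succAbove_ne a x)
  · intro z
    by_cases h : z = a
    · exact Or.inl h
    · obtain ⟨x, hx⟩ := Fin.exists_succAbove_eq h
      exact Or.inr ⟨x, hx.symm⟩
  · rw [Equiv.Perm.mul_apply, aux_expand_self, Fin.ext_iff, aux_rot, aux_succAbove]
    have := c.2
    split_ifs <;> omega
  · intro x h
    rw [Equiv.Perm.mul_apply, Fin.ext_iff, aux_rot] at h
    rw [Equiv.Perm.mul_apply, aux_expand, Fin.ext_iff, aux_rot, aux_succAbove]
    have := c.2
    have := (α x).2
    have := a.2
    split_ifs at h ⊢ <;> omega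
  · intro x h
    rw [Equiv.Perm.mul_apply, Ne, Fin.ext_iff, aux_rot] at h
    rw [Equiv.Perm.mul_apply, Equiv.Perm.mul_apply, aux_expand, Fin.ext_iff, aux_rot,
      aux_succAbove, aux_succAbove, aux_rot]
    have := c.2
    have := (α x).2
    have := a.2
    split_ifs at h ⊢ <;> omega

/-- Let `α ∈ S_n` be a quasi-diagram (an involution of `Fin n`, 0-indexed:
point `1` is `⟨0, _⟩`, point `n+1` of `S_{n+1}` is `Fin.last n`), and let `a : Fin (n+1)`
correspond to `i ∈ {1,…,n+1}`.
(1) If `i = n+1` the orbits of `ζ_{n+1} ι_i(α)` are exactly the orbits `O` of `ζ_n α` with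
`1 ∉ O`, together with `O₀ ∪ {n+1}` where `O₀` is the orbit of `1`.
(2) If `i ≤ n` they are exactly the sets `ϑ_{i,n+1}(O)` for orbits `O` with `i ∉ O`,
together with `ϑ_{i,n+1}(O₀) ∪ {i}` where `O₀` is the orbit of `i`.
In particular `ι_i(α)` has the same number of faces as `α`. -/
theorem stmt_8 (n : ℕ) (hn : 0 < n) (α : Equiv.Perm (Fin n))
    (hα : ∀ x, α (α x) = x) (a : Fin (n + 1)) :
    (a = Fin.last n →
      ∀ ω : Set (Fin (n + 1)),
        IsOrbit (finRotate (n + 1) * expand a α) ω ↔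
          ((∃ O : Set (Fin n), IsOrbit (finRotate n * α) O ∧ (⟨0, hn⟩ : Fin n) ∉ O ∧
              ω = Fin.castSucc '' O) ∨
            ω = Fin.castSucc '' {y | (finRotate n * α).SameCycle ⟨0, hn⟩ y} ∪
              {Fin.last n})) ∧
    (∀ h : (a : ℕ) < n,
      ∀ ω : Set (Fin (n + 1)),
        IsOrbit (finRotate (n + 1) * expand a α) ω ↔
          ((∃ O : Set (Fin n), IsOrbit (finRotate n * α) O ∧ (⟨(a : ℕ), h⟩ : Fin n) ∉ O ∧
              ω = vartheta a '' (Fin.castSucc '' O)) ∨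
            ω = vartheta a '' (Fin.castSucc ''
                {y | (finRotate n * α).SameCycle ⟨(a : ℕ), h⟩ y}) ∪ {a})) ∧
    {ω : Set (Fin (n + 1)) | IsOrbit (finRotate (n + 1) * expand a α) ω}.ncard =
      {O : Set (Fin n) | IsOrbit (finRotate n * α) O}.ncard := by
  have hs : ∀ O : Set (Fin n), vartheta a '' (Fin.castSucc '' O) = a.succAbove '' O := by
    intro O
    rw [Set.image_image]
    simp only [aux_vartheta]
  refine ⟨?_, ?_, ?_⟩
  · rintro rfl ω
    rw [(aux_main α (Fin.last n) ⟨0, hn⟩ (Or.inl ⟨rfl, rfl⟩)).1 ω]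
    rw [Fin.succAbove_last]
  · intro h ω
    simp only [hs]
    exact (aux_main α a ⟨a, h⟩ (Or.inr rfl)).1 ω
  · by_cases h : (a : ℕ) < n
    · exact (aux_main α a ⟨a, h⟩ (Or.inr rfl)).2
    · exact (aux_main α a ⟨0, hn⟩ (Or.inl ⟨by have := a.2; omega, rfl⟩)).2
end

section
/- Let m ≥ 1 and let α ∈ S_{2m} be a fixed-point-free involution such that ζ_{2m}·α has exactly one orbit on {1,…,2m} (i.e. α is a maximal chord diagram). Then m is even. -/
/-- Let `m ≥ 1` and let `α ∈ S_{2m}` be a fixed-point-free involution of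
`Fin (2m)` such that `ζ_{2m} α` (`ζ = finRotate (2m)`) has exactly one orbit, i.e. `α` is a
maximal chord diagram.  Then `m` is even. -/
theorem stmt_17 (m : ℕ) (hm : 0 < m) (α : Equiv.Perm (Fin (2 * m)))
    (hα : ∀ i, α (α i) = i) (hfree : ∀ i, α i ≠ i)
    (hmax : ∀ x y : Fin (2 * m), (finRotate (2 * m) * α).SameCycle x y) :
    Even m := by
  have hne : ∀ x, (finRotate (2 * m) * α) x ≠ x := by
    intro x hx
    have h0 := (hmax x ⟨0, by omega⟩).eq_of_left hx
    have h1 := (hmax x ⟨1, by omega⟩).eq_of_left hx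
    have := h0.symm.trans h1
    simp at this
  have hcyc : (finRotate (2 * m) * α).IsCycle :=
    ⟨⟨0, by omega⟩, hne _, fun y _ => hmax _ y⟩
  have hs := hcyc.sign
  have hsupp : (finRotate (2 * m) * α).support = Finset.univ := by
    ext x; simpa using hne x
  have hsuppα : α.support = Finset.univ := by
    ext x; simpa using hfree x
  have hζ : Equiv.Perm.sign (finRotate (2 * m)) = -1 := by
    obtain ⟨k, rfl⟩ : ∃ k, m = k + 1 := ⟨m - 1, by omega⟩
    have : 2 * (k + 1) = (2 * k + 1) + 1 := by ring
    rw [this, sign_finRotate, Nat.add_sub_cancel, pow_succ, pow_mul]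
    simp
  have hsq : α ^ 2 = 1 := by
    ext x; simp [pow_two, hα]
  have hct : α.cycleType = Multiset.replicate α.cycleType.card 2 :=
    Multiset.eq_replicate_card.2 (fun n hn =>
      ((Nat.prime_two.eq_one_or_self_of_dvd n
        ((Equiv.Perm.dvd_of_mem_cycleType hn).trans (orderOf_dvd_of_pow_eq_one hsq))).resolve_left
        (Equiv.Perm.one_lt_of_mem_cycleType hn).ne'))
  have hsum := α.sum_cycleType
  have hcard : α.cycleType.card = m := by
    rw [hct, hsuppα] at hsum
    simp at hsum
    omega
  have hsα : Equiv.Perm.sign α = (-1) ^ m := by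
    rw [Equiv.Perm.sign_of_cycleType, hsum, hsuppα, hcard, pow_add]
    simp
  rw [hsupp, Equiv.Perm.sign_mul, hζ, hsα] at hs
  by_contra hodd
  rw [Nat.not_even_iff_odd] at hodd
  rw [hodd.neg_one_pow] at hs
  simp at hs
end

section
/- For every positive integer g, the number of maximal chord diagrams in S_{4g}, i.e. the number of fixed-point-free involutions α ∈ S_{4g} such that ζ_{4g}·α has exactly one orbit on {1,…,4g}, equals (4g)! / (4^g · (2g+1)!). -/
open Nat

set_option linter.unusedSectionVars false

namespace CD
open Equiv Equiv.Perm

variable {X : Type*} [Fintype X] [DecidableEq X]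

def Full {X : Type*} (π : Perm X) : Prop := ∀ x y, π.SameCycle x y

abbrev Inv {X : Type*} (π : Perm X) (I : Finset X) : Prop := ∀ x, π x ∈ I ↔ x ∈ I

theorem Full.closed {π : Perm X} (h : Full π) (T : Set X) (x : X) (hx : x ∈ T)
    (hT : ∀ z ∈ T, π z ∈ T) (y : X) : y ∈ T := by
  obtain ⟨i, -, hi⟩ := (h x y).exists_pow_eq'
  have : ∀ k : ℕ, (π ^ k) x ∈ T := by
    intro k
    induction k with
    | zero => simpa
    | succ k ih => rw [_root_.pow_succ', Perm.mul_apply]; exact hT _ ih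
  exact hi ▸ this i

theorem SameCycle_closed {π : Perm X} {x y : X} (h : π.SameCycle x y) (T : Set X) (hx : x ∈ T)
    (hT : ∀ z ∈ T, π z ∈ T) : y ∈ T := by
  obtain ⟨i, -, hi⟩ := h.exists_pow_eq'
  have : ∀ k : ℕ, (π ^ k) x ∈ T := by
    intro k
    induction k with
    | zero => simpa
    | succ k ih => rw [_root_.pow_succ', Perm.mul_apply]; exact hT _ ih
  exact hi ▸ this i

theorem inv_of_maps (π : Perm X) (I : Finset X) (h : ∀ x ∈ I, π x ∈ I) : Inv π I := by
  intro x
  refine ⟨fun hx => ?_, h x⟩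
  have h1 : I.image π = I := by
    apply Finset.eq_of_subset_of_card_le
    · intro y hy
      obtain ⟨z, hz, rfl⟩ := Finset.mem_image.1 hy
      exact h z hz
    · rw [Finset.card_image_of_injective _ π.injective]
  rw [← h1] at hx
  obtain ⟨z, hz, hzx⟩ := Finset.mem_image.1 hx
  exact π.injective hzx ▸ hz

theorem Inv.mul {π₁ π₂ : Perm X} {I : Finset X} (h1 : Inv π₁ I) (h2 : Inv π₂ I) :
    Inv (π₁ * π₂) I := fun x => (h1 _).trans (h2 x)

/-- full cycles have the right cycle type -/
theorem full_iff {π : Perm X} (hc : 2 ≤ Fintype.card X) :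
    Full π ↔ π.cycleType = {Fintype.card X} := by
  have hnt : Nontrivial X := Fintype.one_lt_card_iff_nontrivial.1 hc
  constructor
  · intro h
    have hs : ∀ x, π x ≠ x := by
      intro x hx
      obtain ⟨y, hy⟩ := exists_ne x
      have := h.closed {x} x rfl (by simpa using hx) y
      exact hy this
    have hcyc : π.IsCycle := by
      obtain ⟨x⟩ : Nonempty X := inferInstance
      exact ⟨x, hs x, fun y _ => h x y⟩
    have : π.support = Finset.univ := by ext x; simp [hs x]
    rw [hcyc.cycleType, this, Finset.card_univ]
  · intro h
    have hcyc : π.IsCycle := card_cycleType_eq_one.1 (by rw [h]; rfl)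
    have h2 := sum_cycleType π
    rw [h, Multiset.sum_singleton] at h2
    have : π.support = Finset.univ := (Finset.card_eq_iff_eq_univ _).1 h2.symm
    intro x y
    apply hcyc.sameCycle
    · apply mem_support.1; rw [this]; simp
    · apply mem_support.1; rw [this]; simp

theorem sign_full [Nonempty X] {π : Perm X} (h : Full π) :
    ((sign π : ℤˣ) : ℤ) = -(-1) ^ Fintype.card X := by
  by_cases hc : 2 ≤ Fintype.card X
  · rw [sign_of_cycleType, (full_iff hc).1 h]
    simp [pow_succ]
  · have h1 : Fintype.card X = 1 := by
      have := Fintype.card_pos (α := X)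
      omega
    have : Subsingleton X := Fintype.card_le_one_iff_subsingleton.1 h1.le
    have : π = 1 := Subsingleton.elim _ _
    rw [this, h1]; simp

open Classical in
theorem card_full [Nonempty X] :
    Fintype.card {π : Perm X // Full π} = (Fintype.card X - 1)! := by
  by_cases hc : 2 ≤ Fintype.card X
  · rw [Fintype.card_subtype]
    have := card_of_cycleType_singleton (α := X) hc le_rfl
    rw [Nat.choose_self, mul_one] at this
    rw [← this]
    congr 1
    ext π
    simp [full_iff hc]
  · have h1 : Fintype.card X = 1 := by
      have := Fintype.card_pos (α := X)
      omega
    have : Subsingleton X := Fintype.card_le_one_iff_subsingleton.1 h1.le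
    rw [h1]
    simp only [Nat.sub_self, Nat.factorial_zero]
    rw [Fintype.card_eq_one_iff]
    exact ⟨⟨1, fun x y => by rw [Subsingleton.elim x y]⟩, fun _ => Subsingleton.elim _ _⟩

open Classical in
noncomputable def sg (π : Perm X) (I : Finset X) : ℤ :=
  if h : Inv π I then ((sign (π.subtypePerm (p := fun x => x ∈ I) h) : ℤˣ) : ℤ) else 0

noncomputable def w (π : Perm X) (I : Finset X) : ℤ := (-1) ^ I.card * sg π I

theorem sg_of_inv {π : Perm X} {I : Finset X} (h : Inv π I) :
    sg π I = ((sign (π.subtypePerm (p := fun x => x ∈ I) h) : ℤˣ) : ℤ) := by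
  classical
  rw [sg, dif_pos h]

theorem sg_of_not {π : Perm X} {I : Finset X} (h : ¬ Inv π I) : sg π I = 0 := by
  classical
  rw [sg, dif_neg h]

theorem sg_mul_left {π₁ π₂ : Perm X} {I : Finset X} (h : Inv π₁ I) :
    sg (π₁ * π₂) I = sg π₁ I * sg π₂ I := by
  by_cases h2 : Inv π₂ I
  · rw [sg_of_inv h, sg_of_inv h2, sg_of_inv (h.mul h2), ← Units.val_mul, ← Perm.sign_mul]
    rfl
  · rw [sg_of_not h2, sg_of_not, mul_zero]
    intro h3
    exact h2 fun x => (h _).symm.trans (h3 x)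

theorem sg_mul_right {π₁ π₂ : Perm X} {I : Finset X} (h2 : Inv π₂ I) :
    sg (π₁ * π₂) I = sg π₁ I * sg π₂ I := by
  by_cases h : Inv π₁ I
  · exact sg_mul_left h
  · rw [sg_of_not h, sg_of_not, zero_mul]
    intro h3
    apply h
    intro x
    have a := h3 (π₂⁻¹ x)
    have b := h2 (π₂⁻¹ x)
    simp only [Perm.mul_apply, Equiv.apply_symm_apply, Perm.inv_def] at a b
    exact a.trans b.symm

theorem sg_eq_sign {π : Perm X} {I : Finset X} (h : ∀ x, x ∉ I → π x = x) :
    sg π I = ((sign π : ℤˣ) : ℤ) := by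
  have hI : Inv π I := by
    intro x
    by_cases hx : x ∈ I
    · refine ⟨fun _ => hx, fun _ => ?_⟩
      by_contra h3
      have := h _ h3
      exact h3 ((π.injective this).symm ▸ hx)
    · rw [h x hx]
  have h2 : ∀ x, π x ≠ x → x ∈ I := by
    intro x hx
    by_contra h3
    exact hx (h x h3)
  rw [sg_of_inv hI, ← sign_subtypePerm π (p := fun x => x ∈ I) hI h2]
  congr!

theorem sg_eq_one {π : Perm X} {I : Finset X} (h : ∀ x, x ∈ I → π x = x) :
    sg π I = 1 := by
  have hI : Inv π I := inv_of_maps _ _ fun x hx => by rw [h x hx]; exact hx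
  rw [sg_of_inv hI]
  have : π.subtypePerm (p := fun x => x ∈ I) hI = 1 := by
    ext x
    simp [h x.1 x.2]
  rw [this]; simp

/-- agree on I -/
theorem sg_congr {π π' : Perm X} {I : Finset X} (h : ∀ x ∈ I, π x = π' x) :
    sg π I = sg π' I := by
  have : π = π' * (π'⁻¹ * π) := by group
  have h1 : ∀ x ∈ I, (π'⁻¹ * π) x = x := by
    intro x hx
    simp [Perm.mul_apply, h x hx]
  rw [this, sg_mul_right, sg_eq_one h1, mul_one]
  exact inv_of_maps _ _ fun x hx => by rw [h1 x hx]; exact hx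

theorem sg_union {π : Perm X} {I C : Finset X} (hI : Inv π I) (hC : Inv π C)
    (hd : Disjoint I C) : sg π (I ∪ C) = sg π I * sg π C := by
  have hU : Inv π (I ∪ C) := by
    intro x
    simp only [Finset.mem_union, hI x, hC x]
  set r : Perm X := ofSubtype (π.subtypePerm (p := fun x => x ∈ I) hI) with hr
  set s : Perm X := ofSubtype (π.subtypePerm (p := fun x => x ∈ C) hC) with hs
  have r1 : ∀ x ∈ I, r x = π x := fun x hx => by
    rw [hr, ofSubtype_apply_of_mem _ hx]; rfl
  have r2 : ∀ x, x ∉ I → r x = x := fun x hx => by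
    rw [hr, ofSubtype_apply_of_not_mem _ hx]
  have s1 : ∀ x ∈ C, s x = π x := fun x hx => by
    rw [hs, ofSubtype_apply_of_mem _ hx]; rfl
  have s2 : ∀ x, x ∉ C → s x = x := fun x hx => by
    rw [hs, ofSubtype_apply_of_not_mem _ hx]
  have hdd := Finset.disjoint_left.1 hd
  have e1 : sg π (I ∪ C) = sg (r * s) (I ∪ C) := by
    apply sg_congr
    intro x hx
    rw [Perm.mul_apply]
    rcases Finset.mem_union.1 hx with h | h
    · rw [s2 x (hdd h), r1 x h]
    · rw [s1 x h, r2]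
      intro h3
      exact hdd h3 ((hC x).2 h)
  have e2 : sg (r * s) (I ∪ C) = ((sign (r * s) : ℤˣ) : ℤ) := by
    apply sg_eq_sign
    intro x hx
    rw [Finset.mem_union, not_or] at hx
    rw [Perm.mul_apply, s2 x hx.2, r2 x hx.1]
  rw [e1, e2, Perm.sign_mul, Units.val_mul, hr, hs, sign_ofSubtype, sign_ofSubtype, sg_of_inv hI,
    sg_of_inv hC]

theorem sum_w_eq (π : Perm X) (i0 : X) [Decidable (Full π)] :
    ∑ I : Finset X with i0 ∉ I, w π I = if Full π then 1 else 0 := by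
  classical
  split_ifs with h
  · rw [Finset.sum_eq_single ∅]
    · rw [w, sg_eq_one] <;> simp
    · intro I hI hne
      rw [w, sg_of_not, mul_zero]
      intro hinv
      obtain ⟨x, hx⟩ := Finset.nonempty_iff_ne_empty.2 hne
      have := h.closed (I : Set X) x hx (fun z hz => (hinv z).2 hz) i0
      simp only [Finset.mem_filter, Finset.mem_univ, true_and] at hI
      exact hI this
    · simp
  · obtain ⟨y, hy⟩ : ∃ y, ¬ π.SameCycle i0 y := by
      by_contra! hcon
      exact h fun x y => (hcon x).symm.trans (hcon y)
    set C : Finset X := Finset.univ.filter fun z => π.SameCycle y z with hCdef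
    have memC : ∀ z, z ∈ C ↔ π.SameCycle y z := fun z => by simp [hCdef]
    have hC : Inv π C := fun x => by simp [memC, sameCycle_apply_right]
    have hyC : y ∈ C := (memC y).2 (SameCycle.refl _ _)
    have i0C : i0 ∉ C := fun h3 => hy ((memC _).1 h3).symm
    have hsgC : sg π C = -(-1) ^ C.card := by
      rw [sg_of_inv hC]
      have : Nonempty {x // x ∈ C} := ⟨⟨y, hyC⟩⟩
      rw [sign_full]
      · simp
      · intro a b
        rw [sameCycle_subtypePerm]
        exact ((memC _).1 a.2).symm.trans ((memC _).1 b.2)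
    have key : ∀ I, Inv π I → Disjoint I C → w π I + w π (I ∪ C) = 0 := by
      intro I hI hd
      rw [w, w, sg_union hI hC hd, hsgC, Finset.card_union_of_disjoint hd, pow_add]
      have : ((-1 : ℤ) ^ C.card) * (-1) ^ C.card = 1 := by
        rw [← mul_pow]; simp
      linear_combination (-((-1) ^ I.card * sg π I)) * this
    refine Finset.sum_involution (fun I _ => symmDiff I C) ?_ ?_ ?_ ?_
    · intro I _
      by_cases hI : Inv π I
      · by_cases hyI : y ∈ I
        · have hCI : C ⊆ I := fun z hz =>
            SameCycle_closed ((memC z).1 hz) (I : Set X) hyI fun z hz => (hI z).2 hz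
          have e : symmDiff I C = I \ C := by
            ext z
            have := @hCI z
            simp only [Finset.mem_symmDiff, Finset.mem_sdiff]
            tauto
          have hI' : Inv π (I \ C) := fun z => by
            simp only [Finset.mem_sdiff, hI z, hC z]
          have := key _ hI' Finset.sdiff_disjoint
          rw [Finset.sdiff_union_of_subset hCI] at this
          rw [e, add_comm, this]
        · have hd : Disjoint I C := by
            rw [Finset.disjoint_left]
            intro z hz hzC
            exact hyI (SameCycle_closed ((memC z).1 hzC).symm (I : Set X) hz
              fun z hz => (hI z).2 hz)
          have e : symmDiff I C = I ∪ C := by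
            ext z
            have : z ∈ I → z ∉ C := fun h => Finset.disjoint_left.1 hd h
            simp only [Finset.mem_symmDiff, Finset.mem_union]
            tauto
          rw [e, key I hI hd]
      · have hI' : ¬ Inv π (symmDiff I C) := by
          intro h3
          apply hI
          intro z
          have := h3 z
          simp only [Finset.mem_symmDiff, hC z] at this
          tauto
        rw [w, w, sg_of_not hI, sg_of_not hI']; simp
    · intro I _ _ h3
      have : y ∈ symmDiff I C ↔ y ∈ I := by rw [h3]
      simp only [Finset.mem_symmDiff] at this
      tauto
    · intro I hI
      simp only [Finset.mem_filter, Finset.mem_univ, true_and, Finset.mem_symmDiff] at hI ⊢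
      tauto
    · intro I _
      simp

theorem sum_w_weighted (π : Perm X) [Decidable (Full π)] :
    ∑ I : Finset X, ((Fintype.card X : ℤ) - I.card) * w π I =
      if Full π then (Fintype.card X : ℤ) else 0 := by
  classical
  have h1 : ∑ i0 : X, ∑ I : Finset X with i0 ∉ I, w π I =
      if Full π then (Fintype.card X : ℤ) else 0 := by
    simp_rw [sum_w_eq]
    split_ifs <;> simp
  rw [← h1]
  simp_rw [Finset.sum_filter]
  rw [Finset.sum_comm]
  refine Finset.sum_congr rfl fun I _ => ?_
  rw [← Finset.sum_filter, Finset.sum_const, nsmul_eq_mul]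
  congr 1
  have : (Finset.univ.filter fun x => x ∉ I) = Iᶜ := by ext; simp
  rw [this, Finset.card_compl, Nat.cast_sub (Finset.card_le_univ I)]

end CD

namespace CD
open Equiv Equiv.Perm

variable {X : Type*} [Fintype X] [DecidableEq X]

theorem full_conj (s σ : Perm X) : Full (s * σ * s⁻¹) ↔ Full σ := by
  constructor
  · intro h x y
    have := h (s x) (s y)
    rw [sameCycle_conj] at this
    simpa using this
  · intro h x y
    rw [sameCycle_conj]
    exact h _ _

theorem W_zero {α σ : Perm X} {I : Finset X} (hα : Inv α I) (hne : I.Nonempty)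
    (hnu : I ≠ Finset.univ) (hσ : Full σ) : w (α * σ) I = 0 := by
  rw [w, sg_mul_left hα]
  rw [sg_of_not (π := σ)]
  · simp
  · intro h
    obtain ⟨x, hx⟩ := hne
    apply hnu
    ext y
    simpa using hσ.closed (I : Set X) x hx (fun z hz => (h z).2 hz) y

open Classical in
theorem W_two {α : Perm X} (hα : ∀ x, α (α x) = x) {I : Finset X} {b c : X} (hbc : b ≠ c)
    (hb : b ∉ I) (hc : c ∉ I) (hb' : α b ∈ I) (hc' : α c ∈ I) :
    ∑ σ : Perm X, (if Full σ then w (α * σ) I else 0) = 0 := by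
  set s : Perm X := swap b c with hs
  have hsI : ∀ x ∈ I, s x = x := by
    intro x hx
    apply swap_apply_of_ne_of_ne
    · rintro rfl; exact hb hx
    · rintro rfl; exact hc hx
  have hsinv : s⁻¹ = s := swap_inv _ _
  have key : ∀ σ : Perm X, w (α * (s * σ * s⁻¹)) I = - w (α * σ) I := by
    intro σ
    have e : α * (s * σ * s⁻¹) = swap (α b) (α c) * (α * σ * s) := by
      rw [hsinv, Equiv.swap_apply_apply, hs]
      group
    have h1 : Inv (swap (α b) (α c)) I := by
      apply inv_of_maps
      intro x hx
      rw [swap_apply_def]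
      split_ifs <;> assumption
    have h2 : sg (swap (α b) (α c)) I = -1 := by
      rw [sg_eq_sign]
      · rw [sign_swap (α.injective.ne hbc)]; simp
      · intro x hx
        apply swap_apply_of_ne_of_ne
        · rintro rfl; exact hx hb'
        · rintro rfl; exact hx hc'
    have h3 : Inv s I := inv_of_maps _ _ fun x hx => by rw [hsI x hx]; exact hx
    rw [e, w, sg_mul_left h1, sg_mul_right h3, sg_eq_one hsI, h2, w]
    ring
  have h2 := Equiv.sum_comp (MulAut.conj s).toEquiv
    (fun σ : Perm X => (if Full σ then w (α * σ) I else 0))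
  have h3 : ∀ σ : Perm X, (fun σ : Perm X => (if Full σ then w (α * σ) I else 0))
      ((MulAut.conj s).toEquiv σ) = - (if Full σ then w (α * σ) I else 0) := by
    intro σ
    have : (MulAut.conj s).toEquiv σ = s * σ * s⁻¹ := rfl
    rw [this]
    simp only [full_conj, key]
    split_ifs <;> simp
  rw [Finset.sum_congr rfl fun σ _ => h3 σ, Finset.sum_neg_distrib] at h2
  linarith

theorem inv_not {ρ : Perm X} {I : Finset X} (h : Inv ρ I) : ∀ x, ρ x ∉ I ↔ x ∉ I :=
  fun x => not_congr (h x)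

theorem merge {ρ : Perm X} {I : Finset X} (h : Inv ρ I) {a b : X} (ha : a ∈ I) (hb : b ∉ I) :
    Full (swap a b * ρ) ↔ Full (ρ.subtypePerm (p := fun x => x ∈ I) h) ∧
      Full (ρ.subtypePerm (p := fun x => x ∉ I) (inv_not h)) := by
  have hab : a ≠ b := by rintro rfl; exact hb ha
  constructor
  · intro hf
    have main : ∀ x, (x ∈ I → ρ.SameCycle x a) ∧ (x ∉ I → ρ.SameCycle x b) := by
      intro x
      by_contra hcon
      set T : Set X := {y | ρ.SameCycle x y} with hT
      have haT : a ∉ T := by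
        intro h3
        have h3 : ρ.SameCycle x a := h3
        have hxI : x ∈ I := SameCycle_closed h3.symm (I : Set X) ha fun z hz => (h z).2 hz
        exact hcon ⟨fun _ => h3, fun h4 => absurd hxI h4⟩
      have hbT : b ∉ T := by
        intro h3
        have h3 : ρ.SameCycle x b := h3
        have hxI : x ∉ I := SameCycle_closed h3.symm {z | z ∉ I} hb fun z hz => (inv_not h z).2 hz
        exact hcon ⟨fun h4 => absurd h4 hxI, fun _ => h3⟩
      apply haT
      apply hf.closed T x (SameCycle.refl _ _)
      intro z hz
      have h4 : ρ z ∈ T := sameCycle_apply_right.2 hz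
      rw [Perm.mul_apply, swap_apply_of_ne_of_ne]
      · exact h4
      · rintro h5; exact haT (h5 ▸ h4)
      · rintro h5; exact hbT (h5 ▸ h4)
    constructor
    · intro x y
      rw [sameCycle_subtypePerm]
      exact ((main x).1 x.2).trans ((main y).1 y.2).symm
    · intro x y
      rw [sameCycle_subtypePerm]
      exact ((main x).2 x.2).trans ((main y).2 y.2).symm
  · rintro ⟨h1, h2⟩
    set σ := swap a b * ρ with hσ
    have hE : ∀ x, ρ x ≠ a → ρ x ≠ b → σ.SameCycle x (ρ x) := by
      intro x h3 h4
      have : σ x = ρ x := by rw [hσ, Perm.mul_apply, swap_apply_of_ne_of_ne h3 h4]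
      rw [← this, sameCycle_apply_right]
    have hA : ∀ x : X, x ∈ I → σ.SameCycle a x := by
      intro x hx
      have := h1 ⟨a, ha⟩ ⟨x, hx⟩
      rw [sameCycle_subtypePerm] at this
      refine (SameCycle_closed this {z | z ∈ I ∧ σ.SameCycle a z} ⟨ha, SameCycle.refl _ _⟩ ?_).2
      rintro z ⟨hz, hz2⟩
      refine ⟨(h z).2 hz, ?_⟩
      by_cases h3 : ρ z = a
      · rw [h3]
      · refine hz2.trans (hE z h3 ?_)
        intro h4
        exact hb (h4 ▸ (h z).2 hz)
    have hB : ∀ x : X, x ∉ I → σ.SameCycle b x := by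
      intro x hx
      have := h2 ⟨b, hb⟩ ⟨x, hx⟩
      rw [sameCycle_subtypePerm] at this
      refine (SameCycle_closed this {z | z ∉ I ∧ σ.SameCycle b z} ⟨hb, SameCycle.refl _ _⟩ ?_).2
      rintro z ⟨hz, hz2⟩
      have hz' := (inv_not h z).2 hz
      refine ⟨hz', ?_⟩
      by_cases h3 : ρ z = b
      · rw [h3]
      · refine hz2.trans (hE z ?_ h3)
        intro h4
        exact hz' (h4 ▸ ha)
    have hAB : σ.SameCycle a b := by
      have h3 : ρ (ρ.symm a) = a := by simp
      have h4 : ρ.symm a ∈ I := (h _).1 (by rw [h3]; exact ha)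
      have h5 : σ (ρ.symm a) = b := by rw [hσ, Perm.mul_apply, h3, swap_apply_left]
      have := hA _ h4
      rw [← sameCycle_apply_right, h5] at this
      exact this
    have hall : ∀ x, σ.SameCycle a x := by
      intro x
      by_cases hx : x ∈ I
      · exact hA x hx
      · exact hAB.trans (hB x hx)
    exact fun x y => (hall x).symm.trans (hall y)

open Classical in
theorem card_split {I : Finset X} {a b : X} (ha : a ∈ I) (hb : b ∉ I) :
    Fintype.card {ρ : Perm X // Inv ρ I ∧ Full (swap a b * ρ)} =
      (I.card - 1)! * (Fintype.card X - I.card - 1)! := by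
  have hn1 : Nonempty {x // x ∈ I} := ⟨⟨a, ha⟩⟩
  have hn2 : Nonempty {x // x ∉ I} := ⟨⟨b, hb⟩⟩
  have c1 : Fintype.card {x // x ∈ I} = I.card := by simp
  have c2 : Fintype.card {x // x ∉ I} = Fintype.card X - I.card := by
    rw [Fintype.card_subtype_compl, c1]
  rw [← c2, ← c1, ← card_full, ← card_full, ← Fintype.card_prod]
  have hs : ∀ (p : Perm {x // x ∈ I}) (q : Perm {x // x ∉ I}), Inv (p.subtypeCongr q) I := by
    intro p q
    apply inv_of_maps
    intro x hx
    rw [Perm.subtypeCongr.left_apply _ _ hx]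
    exact (p ⟨x, hx⟩).2
  refine Fintype.card_congr
    { toFun := fun ρ => (⟨ρ.1.subtypePerm (p := fun x => x ∈ I) ρ.2.1, ((merge ρ.2.1 ha hb).1 ρ.2.2).1⟩,
        ⟨ρ.1.subtypePerm (p := fun x => x ∉ I) (inv_not ρ.2.1), ((merge ρ.2.1 ha hb).1 ρ.2.2).2⟩)
      invFun := fun pq => ⟨pq.1.1.subtypeCongr pq.2.1, hs _ _, ?_⟩
      left_inv := ?_
      right_inv := ?_ }
  · rw [merge (hs _ _) ha hb]
    constructor
    · convert pq.1.2
      ext x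
      simp
    · convert pq.2.2
      ext x
      simp [x.2]
  · rintro ⟨ρ, hρ⟩
    apply Subtype.ext
    ext x
    by_cases hx : x ∈ I
    · simp [hx]
    · simp [hx]
  · rintro ⟨p, q⟩
    refine Prod.ext (Subtype.ext ?_) (Subtype.ext ?_)
    · ext x
      simp
    · ext x
      simp [x.2]

open Classical in
theorem W_one {α : Perm X} {I : Finset X} {a b : X} (ha : a ∈ I) (hb : b ∉ I)
    (hα : Inv (α * swap a b) I) :
    ∑ σ : Perm X, (if Full σ then w (α * σ) I else 0) =
      - sg (α * swap a b) I * ((I.card - 1)! * (Fintype.card X - I.card - 1)! : ℕ) := by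
  rw [← card_split ha hb, Fintype.card_subtype, Finset.card_filter, Nat.cast_sum,
    Finset.mul_sum, ← Equiv.sum_comp (Equiv.mulLeft (swap a b))]
  refine Finset.sum_congr rfl fun ρ _ => ?_
  change (if Full (swap a b * ρ) then w (α * (swap a b * ρ)) I else 0) = _
  rw [← mul_assoc, w, sg_mul_left hα]
  by_cases h : Inv ρ I
  · by_cases hf : Full (swap a b * ρ)
    · have hn1 : Nonempty {x // x ∈ I} := ⟨⟨a, ha⟩⟩
      have h1 := sign_full ((merge h ha hb).1 hf).1
      rw [Fintype.card_coe] at h1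
      rw [if_pos hf, if_pos ⟨h, hf⟩, sg_of_inv h, h1]
      have : ((-1 : ℤ) ^ I.card) * (-1) ^ I.card = 1 := by
        rw [← mul_pow]; simp
      push_cast
      linear_combination (- sg (α * swap a b) I) * this
    · rw [if_neg hf, if_neg (fun h3 => hf h3.2)]; simp
  · rw [if_neg (fun h3 : _ ∧ _ => h h3.1), sg_of_not h]; simp

end CD

namespace CD
open Equiv Equiv.Perm

def flip (n : ℕ) : Perm (Fin n × Bool) := prodCongrRight fun _ => Equiv.boolNot

theorem flip_apply {n : ℕ} (p : Fin n × Bool) : flip n p = (p.1, !p.2) := rfl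

theorem flip_flip {n : ℕ} (p : Fin n × Bool) : flip n (flip n p) = p := by
  simp [flip_apply]

def phi {n : ℕ} (p : Fin n × Bool) (K : Finset (Fin n)) : Finset (Fin n × Bool) :=
  insert p (K ×ˢ Finset.univ)

theorem mem_phi {n : ℕ} (p : Fin n × Bool) (K : Finset (Fin n)) (q : Fin n × Bool) :
    q ∈ phi p K ↔ q = p ∨ q.1 ∈ K := by
  simp [phi]

theorem card_phi {n : ℕ} {p : Fin n × Bool} {K : Finset (Fin n)} (h : p.1 ∉ K) :
    (phi p K).card = 2 * K.card + 1 := by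
  rw [phi, Finset.card_insert_of_notMem (by simp [h]), Finset.card_product]
  simp [mul_comm]

open Classical in
theorem W_phi {n : ℕ} {p : Fin n × Bool} {K : Finset (Fin n)} (h : p.1 ∉ K) :
    ∑ σ : Perm (Fin n × Bool), (if Full σ then w (flip n * σ) (phi p K) else 0) =
      - (-1) ^ K.card * ((2 * K.card)! * (2 * n - 2 * K.card - 2)! : ℕ) := by
  have ha : p ∈ phi p K := by simp [mem_phi]
  have hne : p ≠ flip n p := by
    intro h3
    have := congrArg Prod.snd h3
    simp [flip_apply] at this
  have hb : flip n p ∉ phi p K := by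
    rw [mem_phi, not_or]
    exact ⟨hne.symm, h⟩
  set f : Perm (Fin n × Bool) :=
    prodCongrRight (fun z => if z ∈ K then Equiv.boolNot else 1) with hf
  have f1 : ∀ q, q.1 ∈ K → f q = flip n q := by
    intro q hq
    simp [hf, flip_apply, prodCongrRight, hq]
  have f2 : ∀ q, q.1 ∉ K → f q = q := by
    intro q hq
    simp [hf, prodCongrRight, hq]
  have hagree : ∀ q ∈ phi p K, (flip n * swap p (flip n p)) q = f q := by
    intro q hq
    rw [Perm.mul_apply]
    rcases (mem_phi _ _ _).1 hq with rfl | h3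
    · rw [swap_apply_left, flip_flip, f2 _ h]
    · rw [swap_apply_of_ne_of_ne, f1 _ h3]
      · rintro rfl; exact h h3
      · rintro rfl; exact h h3
  have hout : ∀ q, q ∉ phi p K → f q = q := by
    intro q hq
    rw [mem_phi, not_or] at hq
    exact f2 q hq.2
  have hsgn : sg (flip n * swap p (flip n p)) (phi p K) = (-1) ^ K.card := by
    rw [sg_congr hagree, sg_eq_sign hout, hf, sign_prodCongrRight]
    have : ∀ k : Fin n, sign (if k ∈ K then Equiv.boolNot else (1 : Perm Bool)) =
        if k ∈ K then -1 else 1 := by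
      intro k
      split_ifs
      · decide
      · simp
    rw [Finset.prod_congr rfl fun k _ => this k]
    rw [Finset.prod_ite]
    simp
  have hinv : Inv (flip n * swap p (flip n p)) (phi p K) := by
    apply inv_of_maps
    intro q hq
    rw [hagree q hq]
    by_cases h3 : q.1 ∈ K
    · rw [f1 q h3, mem_phi]
      exact Or.inr h3
    · rw [f2 q h3]; exact hq
  rw [W_one ha hb hinv, hsgn, card_phi h]
  congr 4
  simp [mul_comm]
  omega

theorem classify {n : ℕ} (I : Finset (Fin n × Bool)) :
    Inv (flip n) I ∨ (∃ p K, p.1 ∉ K ∧ I = phi p K) ∨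
      ∃ b c, b ≠ c ∧ b ∉ I ∧ c ∉ I ∧ flip n b ∈ I ∧ flip n c ∈ I := by
  by_cases h1 : Inv (flip n) I
  · exact Or.inl h1
  right
  obtain ⟨p, hp, hp'⟩ : ∃ p ∈ I, flip n p ∉ I := by
    by_contra! hcon
    exact h1 (inv_of_maps _ _ hcon)
  by_cases h2 : ∃ q ∈ I, q ≠ p ∧ flip n q ∉ I
  · obtain ⟨q, hq, hqp, hq'⟩ := h2
    right
    refine ⟨flip n p, flip n q, (flip n).injective.ne hqp.symm, hp', hq', ?_, ?_⟩
    · rwa [flip_flip]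
    · rwa [flip_flip]
  · left
    push Not at h2
    have hc : ∀ q : Fin n × Bool, q.1 = p.1 → q = p ∨ q = flip n p := by
      rintro ⟨q1, q2⟩ h
      obtain ⟨p1, p2⟩ := p
      simp only at h
      subst h
      cases q2 <;> cases p2 <;> simp [flip_apply]
    refine ⟨p, Finset.univ.filter fun z => z ≠ p.1 ∧ (z, true) ∈ I, by simp, ?_⟩
    ext q
    rw [mem_phi]
    simp only [Finset.mem_filter, Finset.mem_univ, true_and]
    by_cases hq : q.1 = p.1
    · rcases hc q hq with rfl | rfl
      · simp [hp]
      · constructor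
        · intro h; exact absurd h hp'
        · rintro (h | h)
          · rw [h]; exact hp
          · exact absurd hq h.1
    · have hqp : q ≠ p := by rintro rfl; exact hq rfl
      have hpos : ∀ c, (q.1, c) ∈ I → (q.1, !c) ∈ I := by
        intro c hcI
        exact h2 _ hcI (by rintro rfl; exact hq rfl)
      have h3 := hpos true
      have h4 := hpos false
      obtain ⟨q1, q2⟩ := q
      simp only at *
      simp only [hqp, hq, false_or, ne_eq, not_false_eq_true, true_and]
      cases q2
      · exact ⟨h4, h3⟩
      · rfl

theorem phi_inj {n : ℕ} {p p' : Fin n × Bool} {K K' : Finset (Fin n)} (h : p.1 ∉ K)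
    (h' : p'.1 ∉ K') (he : phi p K = phi p' K') : p = p' ∧ K = K' := by
  have m : ∀ q, (q = p ∨ q.1 ∈ K) ↔ (q = p' ∨ q.1 ∈ K') := fun q => by
    rw [← mem_phi, ← mem_phi, he]
  have hpp : p = p' := by
    by_contra hne
    have h1 : p.1 ∈ K' := by
      have := (m p).1 (Or.inl rfl)
      tauto
    have h2 := (m (flip n p)).2 (Or.inr h1)
    rcases h2 with h2 | h2
    · have := congrArg Prod.snd h2
      simp [flip_apply] at this
    · exact h h2
  subst hpp
  refine ⟨rfl, ?_⟩
  ext z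
  by_cases hz : z = p.1
  · subst hz; tauto
  · have := m (z, true)
    have h3 : (z, true) ≠ p := by rintro rfl; exact hz rfl
    simpa [h3] using this

open Classical in
theorem count_eq {n : ℕ} (hn : 0 < n) :
    (2 * n : ℤ) * (Fintype.card {σ : Perm (Fin n × Bool) // Full σ ∧ Full (flip n * σ)} : ℤ) =
      2 * n * (2 * n - 1)! + 2 * n * ∑ j ∈ Finset.range n, ((n - 1).choose j : ℤ) *
        ((2 * n - (2 * j + 1)) * (- (-1) ^ j * ((2 * j)! * (2 * n - 2 * j - 2)! : ℕ))) := by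
  have hcard : Fintype.card (Fin n × Bool) = 2 * n := by simp [mul_comm]
  have : NeZero n := ⟨hn.ne'⟩
  set W : Finset (Fin n × Bool) → ℤ := fun I =>
    ∑ σ : Perm (Fin n × Bool), (if Full σ then w (flip n * σ) I else 0) with hW
  have step1 : (2 * n : ℤ) *
      (Fintype.card {σ : Perm (Fin n × Bool) // Full σ ∧ Full (flip n * σ)} : ℤ) =
      ∑ I : Finset (Fin n × Bool), ((2 * n : ℤ) - I.card) * W I := by
    simp only [hW, Finset.mul_sum]
    rw [Finset.sum_comm, Fintype.card_subtype, Finset.card_filter, Nat.cast_sum, Finset.mul_sum]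
    refine Finset.sum_congr rfl fun σ _ => ?_
    by_cases h : Full σ
    · have := sum_w_weighted (flip n * σ)
      rw [hcard] at this
      push_cast at this
      simp only [h, true_and, if_true]
      rw [this]
      split_ifs <;> simp
    · simp [h]
  have hW0 : W ∅ = (2 * n - 1)! := by
    have h1 : ∀ σ : Perm (Fin n × Bool), w (flip n * σ) ∅ = 1 := by
      intro σ
      rw [w, sg_eq_one] <;> simp
    simp only [hW, h1]
    rw [← hcard, ← card_full, Fintype.card_subtype, Finset.card_filter, Nat.cast_sum]
    simp
  set D : Finset (Σ _ : Fin n × Bool, Finset (Fin n)) :=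
    (Finset.univ : Finset (Fin n × Bool)).sigma fun p => (Finset.univ.erase p.1).powerset with hD
  have memD : ∀ d, d ∈ D ↔ d.1.1 ∉ d.2 := by
    intro d
    simp only [hD, Finset.mem_sigma, Finset.mem_univ, true_and, Finset.mem_powerset]
    constructor
    · intro h h3
      simpa using h h3
    · intro h z hz
      simp only [Finset.mem_erase, Finset.mem_univ, and_true]
      rintro rfl
      exact h hz
  have step2 : ∑ I : Finset (Fin n × Bool), ((2 * n : ℤ) - I.card) * W I =
      ∑ I ∈ insert ∅ (D.image fun d => phi d.1 d.2), ((2 * n : ℤ) - I.card) * W I := by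
    symm
    apply Finset.sum_subset (Finset.subset_univ _)
    intro I _ hI
    rw [Finset.mem_insert, not_or] at hI
    rcases classify I with h | ⟨p, K, hp, rfl⟩ | ⟨b, c, hbc, hb, hc, hb', hc'⟩
    · by_cases hu : I = Finset.univ
      · rw [hu, Finset.card_univ, hcard]; push_cast; ring
      · have : W I = 0 := by
          apply Finset.sum_eq_zero
          intro σ _
          split_ifs with hσ
          · exact W_zero h (Finset.nonempty_iff_ne_empty.2 hI.1) hu hσ
          · rfl
        rw [this, mul_zero]
    · exact absurd (Finset.mem_image.2 ⟨⟨p, K⟩, (memD _).2 hp, rfl⟩) hI.2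
    · have : W I = 0 := W_two (flip_flip) hbc hb hc hb' hc'
      rw [this, mul_zero]
  rw [step1, step2, Finset.sum_insert, hW0, Finset.sum_image]
  · rw [Finset.card_empty, Nat.cast_zero, sub_zero]
    refine congrArg₂ (· + ·) rfl ?_
    · have e : ∀ d ∈ D, ((2 * n : ℤ) - (phi d.1 d.2).card) * W (phi d.1 d.2) =
          (fun j : ℕ => ((2 * n - (2 * j + 1)) *
            (- (-1) ^ j * ((2 * j)! * (2 * n - 2 * j - 2)! : ℕ)) : ℤ)) d.2.card := by
        intro d hd
        have hd := (memD d).1 hd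
        simp only [hW]
        rw [W_phi hd, card_phi hd]
        push_cast
        ring
      rw [Finset.sum_congr rfl e, hD, Finset.sum_sigma]
      simp only []
      have e2 : ∀ p : Fin n × Bool, ∑ K ∈ (Finset.univ.erase p.1).powerset,
          (fun j : ℕ => ((2 * n - (2 * j + 1)) *
            (- (-1) ^ j * ((2 * j)! * (2 * n - 2 * j - 2)! : ℕ)) : ℤ)) K.card =
          ∑ j ∈ Finset.range n, ((n - 1).choose j : ℤ) *
        ((2 * n - (2 * j + 1)) * (- (-1) ^ j * ((2 * j)! * (2 * n - 2 * j - 2)! : ℕ))) := by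
        intro p
        rw [Finset.sum_powerset_apply_card (fun j : ℕ => ((2 * n - (2 * j + 1)) *
            (- (-1) ^ j * ((2 * j)! * (2 * n - 2 * j - 2)! : ℕ)) : ℤ))]
        simp only [Finset.card_erase_of_mem (Finset.mem_univ _), Finset.card_univ,
          Fintype.card_fin, nsmul_eq_mul]
        rw [Nat.sub_add_cancel hn]
      rw [Finset.sum_congr rfl fun p _ => e2 p, Finset.sum_const, Finset.card_univ, hcard,
        nsmul_eq_mul]
      push_cast
      rfl
  · intro d hd d' hd' he
    obtain ⟨h1, h2⟩ := phi_inj ((memD d).1 hd) ((memD d').1 hd') he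
    obtain ⟨a, b⟩ := d
    obtain ⟨a', b'⟩ := d'
    simp only at h1 h2
    rw [h1, h2]
  · rw [Finset.mem_image]
    rintro ⟨d, -, hd⟩
    have : d.1 ∈ phi d.1 d.2 := by simp [mem_phi]
    rw [hd] at this
    simp at this

/-- the Beta integral -/
theorem beta (a b : ℕ) : ∫ x in (0:ℝ)..1, x ^ a * (1 - x) ^ b =
    (a ! : ℝ) * b ! / (a + b + 1)! := by
  induction b generalizing a with
  | zero =>
    simp [Nat.factorial_succ]
    field_simp
  | succ b ih =>
    have h : ∀ x ∈ Set.uIcc (0:ℝ) 1, HasDerivAt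
      (fun x : ℝ => x ^ (a + 1) / (a + 1) * (1 - x) ^ (b + 1))
      (x ^ a * (1 - x) ^ (b + 1) - (b + 1) / (a + 1) * (x ^ (a + 1) * (1 - x) ^ b)) x := by
      intro x _
      have h1 := ((hasDerivAt_pow (a + 1) x).div_const ((a : ℝ) + 1)).mul
        (((hasDerivAt_id x).const_sub 1).pow (b + 1))
      refine HasDerivAt.congr_deriv h1 ?_
      simp
      field_simp
      ring
    have h2 := intervalIntegral.integral_eq_sub_of_hasDerivAt h
      (Continuous.intervalIntegrable (by fun_prop) _ _)
    rw [intervalIntegral.integral_sub (Continuous.intervalIntegrable (by fun_prop) _ _)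
      (Continuous.intervalIntegrable (by fun_prop) _ _), intervalIntegral.integral_const_mul,
      ih] at h2
    simp at h2
    rw [sub_eq_zero.1 h2]
    rw [show a + 1 + b + 1 = a + (b + 1) + 1 by ring, Nat.factorial_succ a, Nat.factorial_succ b]
    push_cast
    field_simp

theorem identity {n : ℕ} (hn : 0 < n) (he : Even n) :
    ((n : ℝ) + 1) * ∑ j ∈ Finset.range n, ((n - 1).choose j : ℝ) * (-1) ^ j *
      ((2 * j)! * (2 * n - 1 - 2 * j)!) = n * (2 * n - 1)! := by
  obtain ⟨m, rfl⟩ : ∃ m, n = m + 1 := ⟨n - 1, by omega⟩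
  have hI : ∫ x in (0:ℝ)..1, (1 - x) * (1 - 2 * x) ^ m = 1 / (2 * ((m : ℝ) + 2)) := by
    have h : ∀ x ∈ Set.uIcc (0:ℝ) 1, HasDerivAt
      (fun x : ℝ => - (1 - 2 * x) ^ (m + 1) / (4 * (m + 1)) - (1 - 2 * x) ^ (m + 2) / (4 * (m + 2)))
      ((1 - x) * (1 - 2 * x) ^ m) x := by
      intro x _
      have h0 : HasDerivAt (fun x : ℝ => 1 - 2 * x) (-2) x := by
        simpa using ((hasDerivAt_id x).const_mul 2).const_sub 1
      have h1 := ((h0.pow (m + 1)).neg.div_const (4 * ((m : ℝ) + 1))).sub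
        ((h0.pow (m + 2)).div_const (4 * ((m : ℝ) + 2)))
      refine HasDerivAt.congr_deriv h1 ?_
      simp
      field_simp
      ring
    rw [intervalIntegral.integral_eq_sub_of_hasDerivAt h
      (Continuous.intervalIntegrable (by fun_prop) _ _)]
    have e1 : ((1:ℝ) - 2 * 1) ^ (m + 1) = 1 := by
      norm_num [he.neg_one_pow]
    have e2 : ((1:ℝ) - 2 * 1) ^ (m + 2) = -1 := by
      rw [_root_.pow_succ, e1]; norm_num
    rw [e1, e2]
    simp
    field_simp
    ring
  have hexp : ∀ x : ℝ, (1 - x) * (1 - 2 * x) ^ m = ∑ j ∈ Finset.range (m + 1),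
      ((m.choose j : ℝ) * (-1) ^ j) * (x ^ (2 * j) * (1 - x) ^ (2 * m + 1 - 2 * j)) := by
    intro x
    have : 1 - 2 * x = - x ^ 2 + (1 - x) ^ 2 := by ring
    rw [this, add_pow, Finset.mul_sum]
    refine Finset.sum_congr rfl fun j hj => ?_
    have hj : j ≤ m := by simpa [Nat.lt_succ_iff] using hj
    have h2 : 2 * m + 1 - 2 * j = 2 * (m - j) + 1 := by omega
    rw [h2, neg_pow, ← pow_mul, ← pow_mul, _root_.pow_succ]
    ring
  simp_rw [hexp] at hI
  rw [intervalIntegral.integral_finsetSum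
    (fun j _ => Continuous.intervalIntegrable (by fun_prop) _ _)] at hI
  simp_rw [intervalIntegral.integral_const_mul, beta] at hI
  have e3 : ∀ j ∈ Finset.range (m + 1), ((m.choose j : ℝ) * (-1) ^ j) *
      ((2 * j)! * (2 * m + 1 - 2 * j)! / (2 * j + (2 * m + 1 - 2 * j) + 1)!) =
      ((m + 1 - 1).choose j : ℝ) * (-1) ^ j *
      ((2 * j)! * (2 * (m + 1) - 1 - 2 * j)!) / (2 * m + 2)! := by
    intro j hj
    have hj : j ≤ m := by simpa [Nat.lt_succ_iff] using hj
    rw [show 2 * j + (2 * m + 1 - 2 * j) + 1 = 2 * m + 2 by omega,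
      show 2 * (m + 1) - 1 - 2 * j = 2 * m + 1 - 2 * j by omega, Nat.add_sub_cancel]
    ring
  rw [Finset.sum_congr rfl e3, ← Finset.sum_div, div_eq_iff (by positivity)] at hI
  rw [hI, show 2 * (m + 1) - 1 = 2 * m + 1 by omega, Nat.factorial_succ (2 * m + 1)]
  push_cast
  field_simp
  ring

open Classical in
theorem count_final {n : ℕ} (hn : 0 < n) (he : Even n) :
    (n + 1) * Fintype.card {σ : Perm (Fin n × Bool) // Full σ ∧ Full (flip n * σ)} =
      (2 * n - 1)! := by
  have h1 := count_eq hn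
  rw [← mul_add] at h1
  have h1 := mul_left_cancel₀ (by positivity) h1
  have h2 := identity hn he
  have h3 : ((n : ℝ) + 1) * (Fintype.card {σ : Perm (Fin n × Bool) // Full σ ∧ Full (flip n * σ)} : ℝ)
      = (2 * n - 1)! := by
    have h4 := congrArg (Int.cast : ℤ → ℝ) h1
    push_cast at h4
    rw [h4]
    have e : ∀ j ∈ Finset.range n, ((n - 1).choose j : ℝ) *
        ((2 * n - (2 * j + 1)) * (- (-1) ^ j * ((2 * j)! * (2 * n - 2 * j - 2)!))) =
        - (((n - 1).choose j : ℝ) * (-1) ^ j * ((2 * j)! * (2 * n - 1 - 2 * j)!)) := by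
      intro j hj
      have hj := Finset.mem_range.1 hj
      obtain ⟨k, hk⟩ : ∃ k, 2 * n - 1 - 2 * j = k + 1 := ⟨2 * n - 2 - 2 * j, by omega⟩
      rw [hk, show 2 * n - 2 * j - 2 = k by omega, Nat.factorial_succ]
      have : (2 * n : ℝ) = k + 1 + 2 * j + 1 := by
        have : 2 * n = k + 1 + 2 * j + 1 := by omega
        exact_mod_cast this
      rw [this]
      push_cast
      ring
    rw [Finset.sum_congr rfl e, Finset.sum_neg_distrib]
    linear_combination -h2
  exact_mod_cast h3

end CD

namespace CD
open Equiv Equiv.Perm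

variable {X : Type*} [Fintype X] [DecidableEq X]

def Fpf {X : Type*} (α : Perm X) : Prop := (∀ i, α (α i) = i) ∧ (∀ i, α i ≠ i)

theorem fpf_iff {n : ℕ} (hc : Fintype.card X = 2 * n) (α : Perm X) :
    Fpf α ↔ α.cycleType = Multiset.replicate n 2 := by
  have h2 : α ^ 2 = 1 ↔ ∀ i, α (α i) = i := by
    rw [Equiv.ext_iff]; simp [_root_.pow_succ]
  constructor
  · rintro ⟨h, hf⟩
    have hs : α.support = Finset.univ := by ext x; simp [hf x]
    have h3 := pow_prime_eq_one_iff.1 (h2.2 h)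
    have h4 := Multiset.eq_replicate_card.2 h3
    have h5 := sum_cycleType α
    rw [hs, Finset.card_univ, hc, h4, Multiset.sum_replicate, smul_eq_mul] at h5
    rw [h4]
    congr 1
    omega
  · intro h
    constructor
    · rw [← h2, pow_prime_eq_one_iff, h]
      intro c hc
      exact Multiset.eq_of_mem_replicate hc
    · have h5 := sum_cycleType α
      rw [h, Multiset.sum_replicate, smul_eq_mul] at h5
      have : α.support = Finset.univ := (Finset.card_eq_iff_eq_univ _).1 (by omega)
      intro i
      rw [← mem_support, this]
      simp

open Classical in
theorem card_fpf {n : ℕ} (hn : 0 < n) (hc : Fintype.card X = 2 * n) :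
    Fintype.card {α : Perm X // Fpf α} * (2 ^ n * n !) = (2 * n)! := by
  have h := card_of_cycleType_mul_eq X (Multiset.replicate n 2)
  have ht : (Multiset.replicate n 2).toFinset = {2} := by
    rw [Multiset.toFinset_replicate, if_neg hn.ne']
  rw [if_pos, ht, Finset.prod_singleton, Multiset.count_replicate_self, Multiset.prod_replicate,
    Multiset.sum_replicate, hc, smul_eq_mul, mul_comm n 2, Nat.sub_self, Nat.factorial_zero,
    one_mul] at h
  · rw [← h, Fintype.card_subtype]
    congr 2
    ext α
    simp [fpf_iff hc]
  · refine ⟨?_, fun a ha => (Multiset.eq_of_mem_replicate ha).ge⟩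
    rw [Multiset.sum_replicate, hc, smul_eq_mul, mul_comm]

theorem full_permCongr_of {Y Z : Type*} [Fintype Y] [Fintype Z] (e : Y ≃ Z) (π : Perm Y)
    (h : Full π) : Full (e.permCongr π) := by
  classical
  have key : ∀ x y, (e.permCongr π).SameCycle (e x) (e y) := by
    intro x y
    refine h.closed {z | (e.permCongr π).SameCycle (e x) (e z)} x (SameCycle.refl _ _) ?_ y
    intro z hz
    have h1 : e (π z) = (e.permCongr π) (e z) := by simp [Equiv.permCongr_apply]
    have hz : (e.permCongr π).SameCycle (e x) (e z) := hz
    change (e.permCongr π).SameCycle (e x) (e (π z))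
    rw [h1, sameCycle_apply_right]
    exact hz
  intro x y
  simpa using key (e.symm x) (e.symm y)

theorem full_permCongr {Y Z : Type*} [Fintype Y] [Fintype Z] (e : Y ≃ Z) (π : Perm Y) :
    Full (e.permCongr π) ↔ Full π := by
  refine ⟨fun h => ?_, full_permCongr_of e π⟩
  have := full_permCongr_of e.symm _ h
  convert this
  ext x
  simp [Equiv.permCongr_apply]

theorem full_comm (σ α : Perm X) : Full (σ * α) ↔ Full (α * σ) := by
  rw [← full_conj α (σ * α)]
  have : α * (σ * α) * α⁻¹ = α * σ := by group
  rw [this]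

theorem flip_fpf (n : ℕ) : Fpf (flip n) := by
  refine ⟨flip_flip, fun p h => ?_⟩
  have := congrArg Prod.snd h
  simp [flip_apply] at this

theorem exists_label {n : ℕ} (hc : Fintype.card X = 2 * n) {α : Perm X} (hα : Fpf α) :
    ∃ e : X ≃ Fin n × Bool, e.permCongr α = flip n := by
  have hcard : Fintype.card (Fin n × Bool) = 2 * n := by simp [mul_comm]
  let e0 : X ≃ Fin n × Bool := Fintype.equivOfCardEq (hc.trans hcard.symm)
  have h1 : Fpf (e0.permCongr α) := by
    refine ⟨fun i => ?_, fun i h => ?_⟩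
    · simp [Equiv.permCongr_apply, hα.1]
    · rw [Equiv.permCongr_apply, ← Equiv.eq_symm_apply] at h
      exact hα.2 _ h
  have h2 : IsConj (e0.permCongr α) (flip n) := by
    rw [isConj_iff_cycleType_eq, (fpf_iff hcard _).1 h1, (fpf_iff hcard _).1 (flip_fpf n)]
  obtain ⟨c, hcc⟩ := isConj_iff.1 h2
  refine ⟨e0.trans c, ?_⟩
  rw [← hcc]
  ext x <;> simp [Equiv.permCongr_apply, Perm.mul_apply, Perm.inv_def]

open Classical in
theorem card_sigma_side {n : ℕ} (hc : Fintype.card X = 2 * n) {α : Perm X} (hα : Fpf α) :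
    Fintype.card {σ : Perm X // Full σ ∧ Full (σ * α)} =
      Fintype.card {σ : Perm (Fin n × Bool) // Full σ ∧ Full (flip n * σ)} := by
  obtain ⟨e, he⟩ := exists_label hc hα
  refine Fintype.card_congr (Equiv.subtypeEquiv e.permCongr fun σ => ?_)
  rw [full_permCongr, full_comm, ← he, ← full_permCongr e (α * σ)]
  have : e.permCongr (α * σ) = e.permCongr α * e.permCongr σ := by
    ext x <;> simp [Equiv.permCongr_apply, Perm.mul_apply]
  rw [this]

theorem fpf_conj (c α : Perm X) : Fpf (c * α * c⁻¹) ↔ Fpf α := by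
  have : c * α * c⁻¹ = c.permCongr α := by ext x; simp [Perm.inv_def]
  rw [this]
  constructor
  · rintro ⟨h1, h2⟩
    refine ⟨fun i => ?_, fun i h => h2 (c i) ?_⟩
    · have := h1 (c i)
      simpa [Equiv.permCongr_apply] using this
    · simp [Equiv.permCongr_apply, h]
  · rintro ⟨h1, h2⟩
    refine ⟨fun i => ?_, fun i h => ?_⟩
    · simp [Equiv.permCongr_apply, h1]
    · rw [Equiv.permCongr_apply, ← Equiv.eq_symm_apply] at h
      exact h2 _ h

open Classical in
theorem card_alpha_side (hc : 2 ≤ Fintype.card X) {σ ζ : Perm X} (hσ : Full σ) (hζ : Full ζ) :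
    Fintype.card {α : Perm X // Fpf α ∧ Full (σ * α)} =
      Fintype.card {α : Perm X // Fpf α ∧ Full (ζ * α)} := by
  have h2 : IsConj σ ζ := by
    rw [isConj_iff_cycleType_eq, (full_iff hc).1 hσ, (full_iff hc).1 hζ]
  obtain ⟨c, hcc⟩ := isConj_iff.1 h2
  refine Fintype.card_congr (Equiv.subtypeEquiv (MulAut.conj c).toEquiv fun α => ?_)
  have h1 : (MulAut.conj c).toEquiv α = c * α * c⁻¹ := rfl
  rw [h1, fpf_conj, ← hcc]
  have h3 : c * σ * c⁻¹ * (c * α * c⁻¹) = c * (σ * α) * c⁻¹ := by group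
  rw [h3, full_conj]

open Classical in
theorem main_count {n : ℕ} (hn : 0 < n) (he : Even n) (hc : Fintype.card X = 2 * n)
    {ζ : Perm X} (hζ : Full ζ) :
    Fintype.card {α : Perm X // Fpf α ∧ Full (ζ * α)} * (2 ^ n * (n + 1)!) = (2 * n)! := by
  have hne : Nonempty X := Fintype.card_pos_iff.1 (by omega)
  set E := Fintype.card {α : Perm X // Fpf α ∧ Full (ζ * α)} with hE
  set S := Fintype.card {σ : Perm (Fin n × Bool) // Full σ ∧ Full (flip n * σ)} with hS
  have dc : Fintype.card {σ : Perm X // Full σ} * E = Fintype.card {α : Perm X // Fpf α} * S := by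
    have h1 : Fintype.card {σ : Perm X // Full σ} * E =
        ∑ σ : Perm X, ∑ α : Perm X, if Full σ ∧ Fpf α ∧ Full (σ * α) then 1 else 0 := by
      rw [Fintype.card_subtype, Finset.card_filter, Finset.sum_mul]
      refine Finset.sum_congr rfl fun σ _ => ?_
      by_cases h : Full σ
      · simp only [h, if_true, one_mul, true_and]
        rw [hE, ← card_alpha_side (by omega) h hζ, Fintype.card_subtype, Finset.card_filter]
      · simp [h]
    have h2 : Fintype.card {α : Perm X // Fpf α} * S =
        ∑ α : Perm X, ∑ σ : Perm X, if Full σ ∧ Fpf α ∧ Full (σ * α) then 1 else 0 := by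
      rw [Fintype.card_subtype, Finset.card_filter, Finset.sum_mul]
      refine Finset.sum_congr rfl fun α _ => ?_
      by_cases h : Fpf α
      · simp only [h, if_true, one_mul, true_and]
        rw [hS, ← card_sigma_side hc h, Fintype.card_subtype, Finset.card_filter]
      · simp [h]
    rw [h1, h2, Finset.sum_comm]
  rw [card_full, hc] at dc
  have hf := card_fpf hn hc
  have hs := count_final hn he
  rw [← hS] at hs
  have hpos : 0 < (2 * n - 1)! := Nat.factorial_pos _
  apply Nat.eq_of_mul_eq_mul_left hpos
  rw [Nat.factorial_succ]
  calc (2 * n - 1)! * (E * (2 ^ n * ((n + 1) * n !)))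
      = ((2 * n - 1)! * E) * ((n + 1) * (2 ^ n * n !)) := by ring
    _ = (Fintype.card {α : Perm X // Fpf α} * (2 ^ n * n !)) * ((n + 1) * S) := by rw [dc]; ring
    _ = (2 * n - 1)! * (2 * n)! := by rw [hf, hs]; ring

end CD

/-- For every positive integer `g`, the number of maximal chord diagrams in
`S_{4g}`, i.e. of fixed-point-free involutions `α` of `Fin (4g)` such that
`ζ_{4g} α` (`ζ = finRotate (4g)`) has exactly one orbit, equals `(4g)! / (4^g * (2g+1)!)`. -/
theorem stmt_18 (g : ℕ) (hg : 0 < g) :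
    Nat.card {α : Equiv.Perm (Fin (4 * g)) //
        (∀ i, α (α i) = i) ∧ (∀ i, α i ≠ i) ∧
          ∀ x y : Fin (4 * g), (finRotate (4 * g) * α).SameCycle x y} =
      (4 * g)! / (4 ^ g * (2 * g + 1)!) := by
  classical
  have hζ : CD.Full (finRotate (4 * g)) := by
    rw [CD.full_iff (by simp; omega), Fintype.card_fin]
    exact cycleType_finRotate_of_le (by omega)
  have h := CD.main_count (n := 2 * g) (by omega) (even_two_mul g)
    (by rw [Fintype.card_fin]; ring) hζ
  rw [show 2 * (2 * g) = 4 * g by ring, pow_mul, show 2 ^ 2 = 4 from rfl] at h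
  symm
  apply Nat.div_eq_of_eq_mul_left (by positivity)
  rw [← h, Nat.card_eq_fintype_card]
  congr 1
  refine Fintype.card_congr (Equiv.subtypeEquivRight fun α => ?_)
  exact and_assoc
end

section
/- Let n ≥ 1 and write n = 4t + q with t, q nonnegative integers and 0 ≤ q ≤ 3. Then the number of maximal quasi-diagrams in S_n, i.e. involutions α ∈ S_n such that ζ_n·α has exactly one orbit on {1,…,n}, equals Σ_{i=0}^{t} C(n, 4i)·ε_i, where ε_0 = 1 and ε_i = (4i)! / (4^i · (2i+1)!) for i ≥ 1, and C(n, k) denotes the binomial coefficient. -/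
open Nat

namespace QD

open Equiv Equiv.Perm

section general
set_option linter.unusedSectionVars false
variable {V : Type*} [Fintype V] [DecidableEq V]

/-- restriction of a permutation to an invariant set, extended by the identity -/
noncomputable def rp (π : Perm V) (S : Finset V) : Perm V :=
  if h : ∀ x, π x ∈ S ↔ x ∈ S then ofSubtype (π.subtypePerm h) else 1

lemma rp_mem {π : Perm V} {S : Finset V} (h : ∀ x, π x ∈ S ↔ x ∈ S) {x : V} (hx : x ∈ S) :
    rp π S x = π x := by
  rw [rp, dif_pos h, ofSubtype_apply_of_mem _ hx]; rfl

lemma rp_not_mem (π : Perm V) (S : Finset V) {x : V} (hx : x ∉ S) :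
    rp π S x = x := by
  rw [rp]
  split_ifs with h
  · rw [ofSubtype_apply_of_not_mem _ hx]
  · rfl

lemma rp_apply {π : Perm V} {S : Finset V} (h : ∀ x, π x ∈ S ↔ x ∈ S) (x : V) :
    rp π S x = if x ∈ S then π x else x := by
  split_ifs with hx
  · exact rp_mem h hx
  · exact rp_not_mem _ _ hx

lemma perm_mem_iff {f : Perm V} {C : Finset V} (h : ∀ i, i ∈ C → f i ∈ C) (i : V) :
    f i ∈ C ↔ i ∈ C := by
  refine ⟨fun hi => ?_, h i⟩
  have : C.image f = C := by
    apply Finset.eq_of_subset_of_card_le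
    · intro j hj
      obtain ⟨k, hk, rfl⟩ := Finset.mem_image.1 hj
      exact h k hk
    · rw [Finset.card_image_of_injective _ f.injective]
  rw [← this] at hi
  obtain ⟨k, hk, hk2⟩ := Finset.mem_image.1 hi
  rwa [← f.injective hk2]

/-- signed weight of an invariant set -/
noncomputable def w (π : Perm V) (S : Finset V) : ℤ := (-1) ^ S.card * (sign (rp π S) : ℤ)

lemma w_union {π : Perm V} {S T : Finset V} (hS : ∀ x, π x ∈ S ↔ x ∈ S)
    (hT : ∀ x, π x ∈ T ↔ x ∈ T) (hd : Disjoint S T) : w π (S ∪ T) = w π S * w π T := by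
  have hU : ∀ x, π x ∈ S ∪ T ↔ x ∈ S ∪ T := by
    intro x; simp [hS, hT]
  have : rp π (S ∪ T) = rp π S * rp π T := by
    ext x
    rw [Perm.mul_apply, rp_apply hU, rp_apply hS, rp_apply hT]
    have h0 : x ∈ S → x ∉ T := fun h => Finset.disjoint_left.1 hd h
    by_cases h1 : x ∈ S <;> by_cases h2 : x ∈ T <;> simp_all
  rw [w, w, w, this, Finset.card_union_of_disjoint hd, Perm.sign_mul, pow_add]
  push_cast; ring

/-- the orbit of `y` -/
noncomputable def orb (π : Perm V) (y : V) : Finset V := by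
  classical exact Finset.univ.filter (fun z => π.SameCycle y z)

lemma mem_orb {π : Perm V} {y z : V} : z ∈ orb π y ↔ π.SameCycle y z := by
  simp [orb]

lemma orb_inv (π : Perm V) (y : V) : ∀ x, π x ∈ orb π y ↔ x ∈ orb π y := by
  intro x; simp [mem_orb]

lemma w_orb (π : Perm V) (y : V) : w π (orb π y) = -1 := by
  classical
  have h : rp π (orb π y) = π.cycleOf y := by
    ext x
    rw [rp_apply (orb_inv π y), cycleOf_apply]
    simp only [mem_orb]
  rw [w, h]
  by_cases hy : π y = y
  · rw [(cycleOf_eq_one_iff π).2 hy]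
    have : orb π y = {y} := by
      ext z
      rw [mem_orb, Finset.mem_singleton]
      constructor
      · intro hz
        exact (hz.eq_of_left hy).symm
      · rintro rfl; exact SameCycle.refl _ _
    rw [this]; simp
  · have hc := isCycle_cycleOf π hy
    have : (π.cycleOf y).support = orb π y := by
      ext z
      rw [mem_support_cycleOf_iff' hy, mem_orb]
    rw [hc.sign, this]
    push_cast
    have : ((-1 : ℤ) ^ (orb π y).card) * (-1) ^ (orb π y).card = 1 := by
      rw [← mul_pow]; simp
    linarith

lemma inv_orb_sub {π : Perm V} {S : Finset V} (hS : ∀ x, π x ∈ S ↔ x ∈ S) {y z : V}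
    (h : π.SameCycle y z) : y ∈ S ↔ z ∈ S := by
  obtain ⟨i, rfl⟩ := h.exists_nat_pow_eq
  clear h
  induction i with
  | zero => simp
  | succ k ih => rw [ih, _root_.pow_succ', Perm.mul_apply, hS]

open Classical in
lemma part1 (π : Perm V) (x : V) :
    ∑ S ∈ Finset.univ.filter (fun S : Finset V => x ∈ S ∧ ∀ y, π y ∈ S ↔ y ∈ S), w π S
      = if ∀ a b, π.SameCycle a b then -1 else 0 := by
  split_ifs with h
  · have : Finset.univ.filter (fun S : Finset V => x ∈ S ∧ ∀ y, π y ∈ S ↔ y ∈ S)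
        = {orb π x} := by
      ext S
      simp only [Finset.mem_filter, Finset.mem_univ, true_and, Finset.mem_singleton]
      constructor
      · rintro ⟨hx, hS⟩
        ext z
        simp only [mem_orb, h x z, iff_true]
        exact (inv_orb_sub hS (h x z)).1 hx
      · rintro rfl
        exact ⟨mem_orb.2 (SameCycle.refl _ _), orb_inv _ _⟩
    rw [this, Finset.sum_singleton, w_orb]
  · have hy : ∃ y, ¬ π.SameCycle x y := by
      by_contra! hc
      exact h fun a b => (hc a).symm.trans (hc b)
    obtain ⟨y, hy⟩ := hy
    have hxO : x ∉ orb π y := fun hx => hy (mem_orb.1 hx).symm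
    have hO := orb_inv π y
    have key : ∀ S : Finset V, (∀ z, π z ∈ S ↔ z ∈ S) → y ∉ S → Disjoint S (orb π y) := by
      intro S hS hyS
      rw [Finset.disjoint_left]
      intro z hz hzo
      exact hyS ((inv_orb_sub hS (mem_orb.1 hzo)).2 hz)
    have key2 : ∀ S : Finset V, (∀ z, π z ∈ S ↔ z ∈ S) → y ∈ S → orb π y ⊆ S := by
      intro S hS hyS z hzo
      exact ((inv_orb_sub hS (mem_orb.1 hzo)).1 hyS)
    have key3 : ∀ S : Finset V, (∀ z, π z ∈ S ↔ z ∈ S) → y ∉ S →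
        w π (S ∪ orb π y) = - w π S := by
      intro S hS hyS
      rw [w_union hS hO (key S hS hyS), w_orb]; ring
    have hyO : y ∈ orb π y := mem_orb.2 (SameCycle.refl _ _)
    refine Finset.sum_involution (fun S _ => if y ∈ S then S \ orb π y else S ∪ orb π y)
      ?_ ?_ ?_ ?_
    · intro S hS
      simp only [Finset.mem_filter, Finset.mem_univ, true_and] at hS
      split_ifs with hyS
      · have h1 : ∀ z, π z ∈ S \ orb π y ↔ z ∈ S \ orb π y := by
          intro z; rw [Finset.mem_sdiff, Finset.mem_sdiff, hS.2, hO]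
        have := key3 (S \ orb π y) h1 (by simp [hyO])
        rw [Finset.sdiff_union_of_subset (key2 S hS.2 hyS)] at this
        rw [this]; ring
      · rw [key3 S hS.2 hyS]; ring
    · intro S hS _ hE
      split_ifs at hE with hyS
      · rw [← hE] at hyS
        simp [hyO] at hyS
      · apply hyS; rw [← hE]; simp [hyO]
    · intro S hS
      simp only [Finset.mem_filter, Finset.mem_univ, true_and] at hS ⊢
      split_ifs with hyS
      · exact ⟨by simp [hS.1, hxO], fun z => by rw [Finset.mem_sdiff, Finset.mem_sdiff, hS.2, hO]⟩
      · exact ⟨by simp [hS.1], fun z => by rw [Finset.mem_union, Finset.mem_union, hS.2, hO]⟩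
    · intro S hS
      simp only [Finset.mem_filter, Finset.mem_univ, true_and] at hS
      by_cases hyS : y ∈ S
      · simp only [hyS, if_true, Finset.mem_sdiff, hyO, not_true, and_false, if_false]
        exact Finset.sdiff_union_of_subset (key2 S hS.2 hyS)
      · simp only [hyS, if_false, Finset.mem_union, hyO, or_true, if_true]
        exact Finset.union_sdiff_cancel_right (key S hS.2 hyS)

/-- involutions -/
def IsInv (α : Perm V) : Prop := ∀ i, α (α i) = i

open Classical in
/-- inner signed sum -/
noncomputable def F (ζ : Perm V) (S : Finset V) : ℤ :=
  ∑ α ∈ Finset.univ.filter (fun α : Perm V => IsInv α ∧ ∀ y, (ζ * α) y ∈ S ↔ y ∈ S), w (ζ * α) S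

lemma F_zero (ζ : Perm V) (S : Finset V) {x y : V} (hxy : x ≠ y) (hx : x ∈ S) (hy : y ∈ S)
    (hx' : ζ x ∉ S) (hy' : ζ y ∉ S) : F ζ S = 0 := by
  classical
  have hsw : ∀ z, ζ z ∈ S → swap x y z = z := by
    intro z hz
    apply swap_apply_of_ne_of_ne <;> rintro rfl <;> contradiction
  have hsS : ∀ z, swap x y z ∈ S ↔ z ∈ S := by
    intro z
    rw [swap_apply_def]; split_ifs <;> simp_all
  have hsT : ∀ z, ζ (swap x y z) ∈ S ↔ ζ z ∈ S := by
    intro z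
    rw [swap_apply_def]; split_ifs <;> simp_all
  have hinv : ∀ α : Perm V, (∀ y, (ζ * α) y ∈ S ↔ y ∈ S) →
      (∀ z, (ζ * (swap x y * α * swap x y)) z ∈ S ↔ z ∈ S) := by
    intro α hα z
    have := hα (swap x y z)
    simp only [Perm.mul_apply] at this ⊢
    rw [hsT, this, hsS]
  have hw : ∀ α : Perm V, (∀ y, (ζ * α) y ∈ S ↔ y ∈ S) →
      w (ζ * (swap x y * α * swap x y)) S = - w (ζ * α) S := by
    intro α hα
    have : rp (ζ * (swap x y * α * swap x y)) S = rp (ζ * α) S * swap x y := by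
      ext z
      rw [Perm.mul_apply, rp_apply (hinv α hα), rp_apply hα]
      simp only [hsS]
      split_ifs with hz
      · simp only [Perm.mul_apply]
        rw [hsw]
        have := hα (swap x y z)
        simp only [Perm.mul_apply] at this
        rw [this, hsS]; exact hz
      · symm
        apply swap_apply_of_ne_of_ne <;> rintro rfl <;> contradiction
    rw [w, w, this, Perm.sign_mul, sign_swap hxy]; push_cast; ring
  unfold F
  refine Finset.sum_involution (fun α _ => swap x y * α * swap x y) ?_ ?_ ?_ ?_
  · intro α hα
    simp only [Finset.mem_filter, Finset.mem_univ, true_and] at hα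
    rw [hw α hα.2]; ring
  · intro α hα h0 hE
    simp only [Finset.mem_filter, Finset.mem_univ, true_and] at hα
    have := hw α hα.2
    rw [hE] at this
    omega
  · intro α hα
    simp only [Finset.mem_filter, Finset.mem_univ, true_and] at hα ⊢
    refine ⟨fun i => ?_, hinv α hα.2⟩
    simp only [Perm.mul_apply, swap_apply_self, hα.1 _]
  · intro α hα
    ext z; simp

/-- involutions supported in a set -/
noncomputable def invs (U : Finset V) : Finset (Perm V) := by
  classical exact Finset.univ.filter (fun α : Perm V => IsInv α ∧ ∀ i, i ∉ U → α i = i)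

lemma mem_invs {U : Finset V} {α : Perm V} : α ∈ invs U ↔ IsInv α ∧ ∀ i, i ∉ U → α i = i := by
  simp [invs]

lemma inv_maps {U : Finset V} {α : Perm V} (h : IsInv α) (h2 : ∀ i, i ∉ U → α i = i) :
    ∀ i, α i ∈ U ↔ i ∈ U := by
  intro i
  constructor
  · intro hi
    by_contra hc
    rw [h2 i hc] at hi
    exact hc hi
  · intro hi
    by_contra hc
    have := h2 _ hc
    rw [h i] at this
    rw [← this] at hc
    exact hc hi

lemma F_step (ζ : Perm V) (S C D : Finset V) {a e : V} (he : e ∈ S) (ha : a ∉ S)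
    (hζ : ∀ i, ζ i ∈ S ↔ (i ∈ S ∧ i ≠ e) ∨ i = a)
    (hC : ∀ i, i ∈ C ↔ i ∈ S ∧ i ≠ e) (hD : ∀ i, i ∈ D ↔ i ∉ S ∧ i ≠ a) :
    F ζ S = w (ζ * swap a e) S * (∑ β ∈ invs C, (sign β : ℤ)) * (invs D).card := by
  classical
  have hae : a ≠ e := by rintro rfl; exact ha he
  have hg : ∀ y, (ζ * swap a e) y ∈ S ↔ y ∈ S := by
    intro y
    have hea := hae.symm
    rw [Perm.mul_apply, hζ, swap_apply_def]
    split_ifs <;> simp_all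
  -- structure
  have st : ∀ α : Perm V, IsInv α → (∀ y, (ζ * α) y ∈ S ↔ y ∈ S) →
      α a = e ∧ α e = a ∧ (∀ i, α i ∈ C ↔ i ∈ C) ∧ (∀ i, α i ∈ D ↔ i ∈ D) := by
    intro α hα h
    simp only [Perm.mul_apply, hζ] at h
    have h1 : α a = e := by
      have h1 := h a
      have h2 := h (α a)
      rw [hα a] at h2
      simp only [or_true, true_iff] at h2
      by_contra hc
      exact ha (h1.1 (Or.inl ⟨h2, hc⟩))
    have h2 : α e = a := by rw [← h1, hα a]
    have hne : ∀ i, α i = a ↔ i = e := by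
      intro i; rw [← h2]; exact α.injective.eq_iff
    have hne' : ∀ i, α i = e ↔ i = a := by
      intro i; rw [← h1]; exact α.injective.eq_iff
    have hc1 : ∀ i, i ∈ S → i ≠ e → α i ∈ S ∧ α i ≠ e := by
      intro i hi hie
      have := (h i).2 hi
      rw [hne i] at this
      tauto
    have hc2 : ∀ i, α i ∈ C ↔ i ∈ C := by
      intro i
      rw [hC, hC]
      constructor
      · rintro ⟨h3, h4⟩
        have := hc1 _ h3 h4
        rwa [hα i] at this
      · rintro ⟨h3, h4⟩; exact hc1 i h3 h4
    refine ⟨h1, h2, hc2, ?_⟩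
    intro i
    have := hc2 i
    rw [hC, hC, Ne, Ne, hne'] at this
    rw [hD, hD, Ne, hne]
    by_cases hia : i = a
    · subst hia; simp [h1, he]
    · by_cases hie : i = e
      · subst hie; simp [h2, he]
      · simp only [hia, hie, not_false_eq_true, and_true] at this ⊢
        rw [this]
        tauto
  unfold F
  rw [Finset.mul_sum, Finset.sum_mul]
  have e1 : ∀ β ∈ invs C, w (ζ * swap a e) S * (sign β : ℤ) * ((invs D).card : ℤ)
      = ∑ γ ∈ invs D, w (ζ * swap a e) S * (sign β : ℤ) := by
    intro β _
    rw [Finset.sum_const, nsmul_eq_mul]; ring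
  rw [Finset.sum_congr rfl e1, ← Finset.sum_product']
  refine Finset.sum_nbij' (fun α => (rp α C, rp α D)) (fun p => swap a e * p.1 * p.2)
    ?_ ?_ ?_ ?_ ?_
  · intro α hα
    simp only [Finset.mem_filter, Finset.mem_univ, true_and] at hα
    obtain ⟨h1, h2, h3, h4⟩ := st α hα.1 hα.2
    simp only [Finset.mem_product, mem_invs]
    refine ⟨⟨fun i => ?_, fun i hi => rp_not_mem _ _ hi⟩, ⟨fun i => ?_, fun i hi => rp_not_mem _ _ hi⟩⟩
    · rw [rp_apply h3 i]
      split_ifs with hi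
      · rw [rp_mem h3 ((h3 i).2 hi), hα.1]
      · exact rp_not_mem _ _ hi
    · rw [rp_apply h4 i]
      split_ifs with hi
      · rw [rp_mem h4 ((h4 i).2 hi), hα.1]
      · exact rp_not_mem _ _ hi
  · rintro ⟨β, γ⟩ h
    simp only [Finset.mem_product, mem_invs] at h
    obtain ⟨⟨hb1, hb2⟩, hc1, hc2⟩ := h
    have hb3 := inv_maps hb1 hb2
    have hc3 := inv_maps hc1 hc2
    have val : ∀ i, (swap a e * β * γ) i =
        if i = a then e else if i = e then a else if i ∈ S then β i else γ i := by
      intro i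
      simp only [Perm.mul_apply]
      split_ifs with h1 h2 h3
      · subst h1
        rw [hc2 _ (by simp [hD]), hb2 _ (by simp [hC, ha]), swap_apply_left]
      · subst h2
        rw [hc2 _ (by simp [hD, he]), hb2 _ (by simp [hC]), swap_apply_right]
      · rw [hc2 _ (by simp [hD, h3])]
        have := (hb3 i).2 ((hC i).2 ⟨h3, h2⟩)
        rw [hC] at this
        apply swap_apply_of_ne_of_ne _ this.2
        rintro h4
        rw [h4] at this; exact ha this.1
      · have := (hc3 i).2 ((hD i).2 ⟨h3, h1⟩)
        rw [hD] at this
        rw [hb2 _ (by simp [hC, this.1])]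
        apply swap_apply_of_ne_of_ne this.2
        rintro h4
        rw [h4] at this; exact this.1 he
    have hbS : ∀ i, i ∈ S → i ≠ e → β i ∈ S ∧ β i ≠ e := by
      intro i hi hi2
      have := hb3 i
      rw [hC, hC] at this; tauto
    have hcS : ∀ i, i ∉ S → i ≠ a → γ i ∉ S ∧ γ i ≠ a := by
      intro i hi hi2
      have := hc3 i
      rw [hD, hD] at this; tauto
    simp only [Finset.mem_filter, Finset.mem_univ, true_and]
    refine ⟨fun i => ?_, fun i => ?_⟩
    · rw [val i]
      split_ifs with h1 h2 h3
      · subst h1; rw [val]; simp [hae.symm]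
      · subst h2; rw [val]; simp
      · have h4 := hbS i h3 h2
        have h5 : β i ≠ a := by intro h5; rw [h5] at h4; exact ha h4.1
        rw [val]; simp [h4, h5, hb1 i]
      · have h4 := hcS i h3 h1
        have h5 : γ i ≠ e := by intro h5; rw [h5] at h4; exact h4.1 he
        rw [val]; simp [h4, h5, hc1 i]
    · rw [Perm.mul_apply, hζ, val]
      split_ifs with h1 h2 h3
      · subst h1; simp [ha, hae.symm]
      · subst h2; simp [he]
      · have h4 := hbS i h3 h2
        simp [h4, h3]
      · have h4 := hcS i h3 h1
        simp [h4, h3]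
  · intro α hα
    simp only [Finset.mem_filter, Finset.mem_univ, true_and] at hα
    obtain ⟨h1, h2, h3, h4⟩ := st α hα.1 hα.2
    ext i
    simp only [Perm.mul_apply]
    rw [rp_apply h4]
    by_cases hia : i = a
    · subst hia
      rw [if_neg (by simp [hD]), rp_not_mem _ _ (by simp [hC, ha]), h1, swap_apply_left]
    by_cases hie : i = e
    · subst hie
      rw [if_neg (by simp [hD, he]), rp_not_mem _ _ (by simp [hC]), h2, swap_apply_right]
    by_cases hi : i ∈ S
    · rw [if_neg (by simp [hD, hi]), rp_mem h3 (by simp [hC, hi, hie])]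
      have := (h3 i).2 ((hC i).2 ⟨hi, hie⟩)
      rw [hC] at this
      apply swap_apply_of_ne_of_ne _ this.2
      intro h5; rw [h5] at this; exact ha this.1
    · rw [if_pos (by simp [hD, hi, hia])]
      have := (h4 i).2 ((hD i).2 ⟨hi, hia⟩)
      rw [hD] at this
      rw [rp_not_mem _ _ (by simp [hC, this])]
      apply swap_apply_of_ne_of_ne this.2
      intro h5; rw [h5] at this; exact this.1 he
  · rintro ⟨β, γ⟩ h
    simp only [Finset.mem_product, mem_invs] at h
    obtain ⟨⟨hb1, hb2⟩, hc1, hc2⟩ := h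
    have hb3 := inv_maps hb1 hb2
    have hc3 := inv_maps hc1 hc2
    have vC : ∀ i, i ∈ C → (swap a e * β * γ) i = β i := by
      intro i hi
      simp only [Perm.mul_apply]
      have h1 := (hb3 i).2 hi
      rw [hC] at hi h1
      rw [hc2 i (by simp [hD, hi])]
      apply swap_apply_of_ne_of_ne _ h1.2
      intro h5; rw [h5] at h1; exact ha h1.1
    have vD : ∀ i, i ∈ D → (swap a e * β * γ) i = γ i := by
      intro i hi
      simp only [Perm.mul_apply]
      have h1 := (hc3 i).2 hi
      rw [hD] at hi h1
      rw [hb2 (γ i) (by simp [hC, h1])]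
      apply swap_apply_of_ne_of_ne h1.2
      intro h5; rw [h5] at h1; exact h1.1 he
    have iC : ∀ i, (swap a e * β * γ) i ∈ C ↔ i ∈ C := by
      have : ∀ i, i ∈ C → (swap a e * β * γ) i ∈ C := by
        intro i hi; rw [vC i hi, hb3]; exact hi
      exact fun i => perm_mem_iff this i
    have iD : ∀ i, (swap a e * β * γ) i ∈ D ↔ i ∈ D := by
      have : ∀ i, i ∈ D → (swap a e * β * γ) i ∈ D := by
        intro i hi; rw [vD i hi, hc3]; exact hi
      exact fun i => perm_mem_iff this i
    refine Prod.ext ?_ ?_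
    · ext i
      dsimp only
      rw [rp_apply iC]
      split_ifs with hi
      · rw [vC i hi]
      · rw [hb2 i hi]
    · ext i
      dsimp only
      rw [rp_apply iD]
      split_ifs with hi
      · rw [vD i hi]
      · rw [hc2 i hi]
  · intro α hα
    simp only [Finset.mem_filter, Finset.mem_univ, true_and] at hα
    obtain ⟨h1, h2, h3, h4⟩ := st α hα.1 hα.2
    dsimp only
    have : rp (ζ * α) S = rp (ζ * swap a e) S * rp α C := by
      ext i
      rw [Perm.mul_apply, rp_apply hα.2, rp_apply hg, rp_apply h3]
      by_cases hie : i = e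
      · subst hie
        simp [he, hC, h2]
      by_cases hi : i ∈ S
      · have hiC := (hC i).2 ⟨hi, hie⟩
        have := (h3 i).2 hiC
        rw [hC] at this
        rw [if_pos hi, if_pos hiC, if_pos this.1]
        simp only [Perm.mul_apply]
        rw [swap_apply_of_ne_of_ne _ this.2]
        intro h5; rw [h5] at this; exact ha this.1
      · simp [hi, hC]
    rw [w, w, this, Perm.sign_mul]; push_cast; ring

end general

section counting
variable {V : Type*} [Fintype V] [DecidableEq V]
set_option linter.unusedSectionVars false

/-- odd double factorials: the number of perfect matchings of `2j` points -/
def d : ℕ → ℕ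
  | 0 => 1
  | j + 1 => (2 * j + 1) * d j

lemma d_fact (j : ℕ) : (2 * j)! = d j * (2 ^ j * j !) := by
  induction j with
  | zero => simp [d]
  | succ k ih =>
    rw [show 2 * (k + 1) = 2 * k + 1 + 1 by ring, Nat.factorial_succ, Nat.factorial_succ, ih, d,
      Nat.factorial_succ, _root_.pow_succ]
    ring

lemma isInv_iff_sq {α : Perm V} : IsInv α ↔ α ^ 2 = 1 := by
  rw [Equiv.ext_iff]
  simp [IsInv, sq]

lemma card_type (j : ℕ) :
    (Finset.univ.filter (fun σ : Perm V => σ.cycleType = Multiset.replicate j 2)).card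
      = (Fintype.card V).choose (2 * j) * d j := by
  have h := card_of_cycleType_mul_eq V (Multiset.replicate j 2)
  have hp : ∏ n ∈ (Multiset.replicate j 2).toFinset, ((Multiset.replicate j 2).count n)! = j ! := by
    rcases Nat.eq_zero_or_pos j with rfl | hj
    · simp
    · rw [Multiset.toFinset_replicate, if_neg (by omega)]
      simp
  rw [hp] at h
  simp only [Multiset.sum_replicate, Multiset.prod_replicate, smul_eq_mul, mul_comm j 2] at h
  by_cases hj : 2 * j ≤ Fintype.card V
  · rw [if_pos ⟨hj, fun a ha => (Multiset.eq_of_mem_replicate ha).ge⟩] at h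
    have h2 := Nat.choose_mul_factorial_mul_factorial hj
    rw [d_fact j] at h2
    have h3 : 0 < (Fintype.card V - 2 * j)! * 2 ^ j * j ! := by positivity
    apply Nat.eq_of_mul_eq_mul_right h3
    rw [h, ← h2]; ring
  · rw [Nat.choose_eq_zero_of_lt (by omega), zero_mul]
    rw [if_neg (by tauto)] at h
    have h3 : 0 < (Fintype.card V - 2 * j)! * 2 ^ j * j ! := by positivity
    rcases Nat.mul_eq_zero.1 h with h4 | h4
    · exact h4
    · omega

lemma sum_inv_all (x : ℤ) (N : ℕ) (hN : Fintype.card V < N) :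
    ∑ σ ∈ invs (Finset.univ : Finset V), x ^ (Multiset.card σ.cycleType)
      = ∑ j ∈ Finset.range N, x ^ j * ((Fintype.card V).choose (2 * j) * d j : ℕ) := by
  have hm : ∀ σ ∈ invs (Finset.univ : Finset V),
      Multiset.card σ.cycleType ∈ Finset.range N := by
    intro σ hσ
    rw [Finset.mem_range]
    have h1 := σ.sum_cycleType_le
    have h2 : Multiset.card σ.cycleType • 1 ≤ σ.cycleType.sum :=
      Multiset.card_nsmul_le_sum fun a ha => (one_lt_of_mem_cycleType ha).le
    simp at h2
    omega
  rw [← Finset.sum_fiberwise_of_maps_to hm]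
  apply Finset.sum_congr rfl
  intro j _
  rw [← card_type j]
  have : (invs (Finset.univ : Finset V)).filter (fun σ => Multiset.card σ.cycleType = j)
      = Finset.univ.filter (fun σ : Perm V => σ.cycleType = Multiset.replicate j 2) := by
    ext σ
    simp only [Finset.mem_filter, mem_invs, Finset.mem_univ, true_and, not_true, false_imp_iff,
      implies_true, and_true]
    rw [isInv_iff_sq]
    constructor
    · rintro ⟨h1, rfl⟩
      exact cycleType_of_pow_prime_eq_one h1
    · intro h
      refine ⟨pow_prime_eq_one_iff.2 fun c hc => ?_, by rw [h]; simp⟩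
      rw [h] at hc
      exact Multiset.eq_of_mem_replicate hc
  rw [this]
  rw [Finset.sum_congr rfl (g := fun _ => x ^ j)]
  · rw [Finset.sum_const, nsmul_eq_mul]; ring
  · intro σ hσ
    simp only [Finset.mem_filter, Finset.mem_univ, true_and] at hσ
    rw [hσ]; simp

lemma sum_inv (U : Finset V) (x : ℤ) (N : ℕ) (hN : U.card < N) :
    ∑ σ ∈ invs U, x ^ (Multiset.card σ.cycleType)
      = ∑ j ∈ Finset.range N, x ^ j * ((U.card).choose (2 * j) * d j : ℕ) := by
  have h := sum_inv_all (V := {i // i ∈ U}) x N (by simpa using hN)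
  rw [Fintype.card_coe] at h
  rw [← h]
  symm
  refine Finset.sum_bij (fun σ _ => ofSubtype σ) ?_ ?_ ?_ ?_
  · intro σ hσ
    rw [mem_invs] at hσ ⊢
    refine ⟨?_, fun i hi => ofSubtype_apply_of_not_mem _ hi⟩
    rw [isInv_iff_sq, ← map_pow, isInv_iff_sq.1 hσ.1, map_one]
  · intro σ _ τ _ h
    exact ofSubtype_injective h
  · intro α hα
    rw [mem_invs] at hα
    have h1 := inv_maps hα.1 hα.2
    refine ⟨α.subtypePerm h1, ?_, ?_⟩
    · rw [mem_invs]
      refine ⟨fun i => ?_, fun i hi => absurd (Finset.mem_univ i) hi⟩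
      ext; simp [hα.1 _]
    · apply ofSubtype_subtypePerm
      intro i hi
      by_contra hc
      exact hi (hα.2 i hc)
  · intro σ _
    rw [cycleType_ofSubtype]

/-- signed count of involutions -/
def sg (N c : ℕ) : ℤ := ∑ j ∈ Finset.range N, (-1) ^ j * (c.choose (2 * j) * d j : ℕ)
/-- count of involutions -/
def ic (N c : ℕ) : ℤ := ∑ j ∈ Finset.range N, (c.choose (2 * j) * d j : ℕ)

lemma sum_sign_invs (U : Finset V) (N : ℕ) (hN : U.card < N) :
    ∑ σ ∈ invs U, (sign σ : ℤ) = sg N U.card := by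
  rw [sg, ← sum_inv U (-1) N hN]
  apply Finset.sum_congr rfl
  intro σ hσ
  rw [mem_invs, isInv_iff_sq] at hσ
  have := cycleType_of_pow_prime_eq_one hσ.1
  rw [sign_of_cycleType', this]
  simp

lemma card_invs (U : Finset V) (N : ℕ) (hN : U.card < N) :
    ((invs U).card : ℤ) = ic N U.card := by
  have := sum_inv U 1 N hN
  simpa [ic] using this

end counting

section cyclic
variable {m : ℕ}

/-- the cyclic interval of length `c + 1` ending in `e` -/
def itv (e : Fin (m + 1)) (c : ℕ) : Finset (Fin (m + 1)) :=
  Finset.univ.filter (fun i => (e - i).val ≤ c)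

lemma mem_itv {e i : Fin (m + 1)} {c : ℕ} : i ∈ itv e c ↔ (e - i).val ≤ c := by
  simp [itv]

lemma val_zero_iff {e i : Fin (m + 1)} : (e - i).val = 0 ↔ i = e := by
  rw [Fin.val_eq_zero_iff, sub_eq_zero, eq_comm]

lemma vsub (e i : Fin (m + 1)) :
    (e - finRotate (m + 1) i).val = if i = e then m else (e - i).val - 1 := by
  rw [finRotate_apply, ← sub_sub, Fin.coe_sub_one]
  simp only [sub_eq_zero, eq_comm]

/-- the element preceding the interval -/
def pr (e : Fin (m + 1)) (c : ℕ) : Fin (m + 1) := e - Fin.ofNat (m + 1) (c + 1)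

lemma eq_pr {e i : Fin (m + 1)} {c : ℕ} (hc : c < m) : i = pr e c ↔ (e - i).val = c + 1 := by
  have h : (Fin.ofNat (m + 1) (c + 1)).val = c + 1 := by
    simp [Fin.ofNat, Nat.mod_eq_of_lt (show c + 1 < m + 1 by omega)]
  rw [← h, Fin.val_inj, pr]
  constructor
  · rintro rfl; abel
  · intro h2; rw [← h2]; abel

lemma rot_mem {e : Fin (m + 1)} {c : ℕ} (hc : c < m) (i : Fin (m + 1)) :
    finRotate (m + 1) i ∈ itv e c ↔ (i ∈ itv e c ∧ i ≠ e) ∨ i = pr e c := by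
  rw [mem_itv, mem_itv, vsub, eq_pr hc]
  have := val_zero_iff (e := e) (i := i)
  split_ifs with h
  · have := this.2 h
    simp only [h, ne_eq, not_true, and_false, false_or]
    rw [← h, sub_self]; simp; omega
  · simp only [ne_eq, h, not_false_iff, and_true]
    have : (e - i).val ≠ 0 := fun hh => h (this.1 hh)
    omega

lemma card_itv (e : Fin (m + 1)) {c : ℕ} (hc : c ≤ m) : (itv e c).card = c + 1 := by
  have : itv e c = (Finset.Iic (⟨c, by omega⟩ : Fin (m + 1))).image (fun k => e - k) := by
    ext i
    rw [mem_itv, Finset.mem_image]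
    constructor
    · intro h
      exact ⟨e - i, by rw [Finset.mem_Iic, Fin.le_def]; exact h, by abel⟩
    · rintro ⟨k, hk, rfl⟩
      rw [Finset.mem_Iic, Fin.le_def] at hk
      rw [show e - (e - k) = k by abel]; exact hk
  rw [this, Finset.card_image_of_injective _ sub_right_injective]
  simp

lemma swap_inv {e : Fin (m + 1)} {c : ℕ} (hc : c < m) (y : Fin (m + 1)) :
    (finRotate (m + 1) * swap (pr e c) e) y ∈ itv e c ↔ y ∈ itv e c := by
  have h1 : e ∈ itv e c := by simp [mem_itv]
  have h2 : pr e c ∉ itv e c := by rw [mem_itv, (eq_pr hc).1 rfl]; omega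
  have h3 : pr e c ≠ e := by intro h; rw [h] at h2; exact h2 h1
  have h4 := h3.symm
  rw [Perm.mul_apply, rot_mem hc, swap_apply_def]
  split_ifs with h5 h6
  · subst h5; simp [h2, h4]
  · subst h6; simp [h1]
  · simp [h5, h6]

lemma sign_cyc (e : Fin (m + 1)) (c : ℕ) (hc : c < m) :
    sign (rp (finRotate (m + 1) * swap (pr e c) e) (itv e c)) = (-1) ^ c := by
  induction c with
  | zero =>
    have : rp (finRotate (m + 1) * swap (pr e 0) e) (itv e 0) = 1 := by
      ext i
      rw [rp_apply (swap_inv hc)]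
      split_ifs with hi
      · have h1 := (swap_inv hc i).2 hi
        rw [mem_itv, Nat.le_zero, val_zero_iff] at hi h1
        rw [h1, hi]; rfl
      · rfl
    rw [this]; simp
  | succ c ih =>
    have hc' : c < m := by omega
    have he : e ∈ itv e c := by simp [mem_itv]
    have ha : pr e c ∉ itv e c := by rw [mem_itv, (eq_pr hc').1 rfl]; omega
    have hae : pr e c ≠ e := by intro h; rw [h] at ha; exact ha he
    have ha2 : pr e c ≠ pr e (c + 1) := by
      rw [Ne, eq_pr hc, (eq_pr hc').1 rfl]; omega
    have he2 : pr e (c + 1) ≠ e := by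
      rw [Ne, ← val_zero_iff, (eq_pr hc).1 rfl]; omega
    have hr : finRotate (m + 1) (pr e (c + 1)) = pr e c := by
      rw [eq_pr hc', vsub, if_neg he2, (eq_pr hc).1 rfl]; omega
    have hm : ∀ i, i ∈ itv e (c + 1) ↔ i ∈ itv e c ∨ i = pr e c := by
      intro i; rw [mem_itv, mem_itv, eq_pr hc']; omega
    have : rp (finRotate (m + 1) * swap (pr e (c + 1)) e) (itv e (c + 1)) =
        rp (finRotate (m + 1) * swap (pr e c) e) (itv e c) * swap e (pr e c) := by
      apply Equiv.ext
      intro i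
      rw [Perm.mul_apply, rp_apply (swap_inv hc)]
      by_cases h1 : i = e
      · subst h1
        rw [swap_apply_left, rp_not_mem _ _ ha, if_pos ((hm _).2 (Or.inl he)), Perm.mul_apply,
          swap_apply_right, hr]
      by_cases h2 : i = pr e c
      · subst h2
        rw [swap_apply_right, rp_mem (swap_inv hc') he, if_pos ((hm _).2 (Or.inr rfl)),
          Perm.mul_apply, Perm.mul_apply, swap_apply_right, swap_apply_of_ne_of_ne ha2 hae]
      rw [swap_apply_of_ne_of_ne h1 h2, rp_apply (swap_inv hc')]
      by_cases h3 : i ∈ itv e c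
      · rw [if_pos h3, if_pos ((hm _).2 (Or.inl h3)), Perm.mul_apply, Perm.mul_apply,
          swap_apply_of_ne_of_ne h2 h1, swap_apply_of_ne_of_ne _ h1]
        rw [Ne, eq_pr hc]
        rw [mem_itv] at h3; omega
      · rw [if_neg h3, if_neg]
        rw [hm]; tauto
    rw [this, Perm.sign_mul, ih hc', sign_swap hae.symm, _root_.pow_succ]

lemma F_itv (e : Fin (m + 1)) (c N : ℕ) (hc : c < m) (hN : m + 1 < N) :
    F (finRotate (m + 1)) (itv e c) = - (sg N c * ic N (m - 1 - c)) := by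
  have he : e ∈ itv e c := by simp [mem_itv]
  have ha : pr e c ∉ itv e c := by rw [mem_itv, (eq_pr hc).1 rfl]; omega
  have h1 := card_itv e (c := c) (by omega)
  have hC : ((itv e c).erase e).card = c := by
    rw [Finset.card_erase_of_mem he, h1]; rfl
  have hD : (((itv e c)ᶜ).erase (pr e c)).card = m - 1 - c := by
    rw [Finset.card_erase_of_mem (by simpa using ha), Finset.card_compl, h1, Fintype.card_fin]
    omega
  rw [F_step (finRotate (m + 1)) (itv e c) ((itv e c).erase e) (((itv e c)ᶜ).erase (pr e c))
    he ha (rot_mem hc) (by intro i; simp [and_comm]) (by intro i; simp [and_comm]),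
    sum_sign_invs _ N (by omega), card_invs _ N (by omega), hC, hD, w, sign_cyc e c hc, h1]
  have : ((-1 : ℤ) ^ c) * (-1) ^ c = 1 := by rw [← mul_pow]; simp
  push_cast
  rw [_root_.pow_succ]
  linear_combination (-(sg N c * ic N (m - 1 - c))) * this

lemma F_univ (N : ℕ) (hN : m + 1 < N) :
    F (finRotate (m + 1)) Finset.univ = - sg N (m + 1) := by
  classical
  have h0 := sum_sign_invs (Finset.univ : Finset (Fin (m + 1))) N (by simpa using hN)
  rw [Finset.card_univ, Fintype.card_fin] at h0
  rw [← h0, F, ← Finset.sum_neg_distrib]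
  apply Finset.sum_congr
  · ext α; simp [mem_invs]
  · intro α _
    have : rp (finRotate (m + 1) * α) Finset.univ = finRotate (m + 1) * α := by
      ext i; rw [rp_mem (by simp) (Finset.mem_univ _)]
    rw [w, this, Perm.sign_mul, sign_finRotate, Finset.card_univ, Fintype.card_fin]
    have : ((-1 : ℤ) ^ m) * (-1) ^ m = 1 := by rw [← mul_pow]; simp
    push_cast
    rw [_root_.pow_succ]
    linear_combination (-(sign α : ℤ)) * this

lemma classify (S : Finset (Fin (m + 1))) (hne : S.Nonempty) (hu : S ≠ Finset.univ)
    (hF : F (finRotate (m + 1)) S ≠ 0) : ∃ e : Fin (m + 1), ∃ c < m, S = itv e c := by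
  have huniq : ∀ x y, x ∈ S → y ∈ S → finRotate (m + 1) x ∉ S → finRotate (m + 1) y ∉ S →
      x = y := by
    intro x y hx hy hx' hy'
    by_contra hc
    exact hF (F_zero _ S hc hx hy hx' hy')
  have hex : ∃ e ∈ S, finRotate (m + 1) e ∉ S := by
    by_contra! hc
    apply hu
    obtain ⟨y, hy⟩ := hne
    have : ∀ k : ℕ, y + Fin.ofNat (m + 1) k ∈ S := by
      intro k
      induction k with
      | zero => simpa using hy
      | succ k ih =>
        have := hc _ ih
        rw [finRotate_apply] at this
        convert this using 1
        rw [add_assoc]; congr 1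
        ext; simp [Fin.val_add]
    ext z
    simp only [Finset.mem_univ, iff_true]
    have := this (z - y).val
    simpa using this
  obtain ⟨e, he, hee⟩ := hex
  rw [finRotate_apply] at hee
  have hem : e - Fin.ofNat (m + 1) m = e + 1 := by
    rw [sub_eq_add_neg]; congr 1
    rw [neg_eq_iff_add_eq_zero]
    ext; simp
  have hk : ∃ k : ℕ, e - Fin.ofNat (m + 1) k ∉ S := by
    refine ⟨m, ?_⟩
    rwa [hem]
  have hkm : Nat.find hk ≤ m := by
    apply Nat.find_min'
    rwa [hem]
  have hsp := Nat.find_spec hk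
  have hmin : ∀ j, j < Nat.find hk → e - Fin.ofNat (m + 1) j ∈ S := by
    intro j hj
    have := Nat.find_min hk hj
    simpa using this
  set k := Nat.find hk
  have hk0 : 0 < k := by
    rcases Nat.eq_zero_or_pos k with h | h
    · rw [h] at hsp; exact absurd (by simpa using he) hsp
    · exact h
  have hofval : ∀ i : Fin (m + 1), e - Fin.ofNat (m + 1) (e - i).val = i := by
    intro i; simp
  have hdesc : ∀ t, k + t ≤ m → e - Fin.ofNat (m + 1) (k + t) ∉ S := by
    intro t
    induction t with
    | zero => intro _; exact hsp
    | succ t ih =>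
      intro ht hc
      apply ih (by omega)
      have h1 := fun h => huniq _ _ hc he h (by rw [finRotate_apply]; exact hee)
      have h2 : e - Fin.ofNat (m + 1) (k + (t + 1)) ≠ e := by
        have := (eq_pr (e := e) (i := e - Fin.ofNat (m + 1) (k + (t + 1))) (c := k + t)
          (by omega)).1 rfl
        intro h3
        rw [h3] at this
        simp at this
      have h4 : finRotate (m + 1) (e - Fin.ofNat (m + 1) (k + (t + 1))) ∈ S := by
        by_contra hcon
        exact h2 (h1 hcon)
      convert h4 using 1
      rw [finRotate_apply, sub_add, ]
      congr 1
      rw [eq_sub_iff_add_eq]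
      ext; simp [Fin.val_add, add_assoc]
  refine ⟨e, k - 1, by omega, ?_⟩
  ext i
  rw [mem_itv]
  constructor
  · intro hi
    by_contra hc
    have := hdesc ((e - i).val - k) (by have := (e - i).isLt; omega)
    rw [show k + ((e - i).val - k) = (e - i).val by omega, hofval] at this
    exact this hi
  · intro hi
    have := hmin (e - i).val (by omega)
    rwa [hofval] at this

open Classical in
lemma main_count (N : ℕ) (hN : m + 1 < N) :
    ((Finset.univ.filter (fun α : Perm (Fin (m + 1)) => IsInv α ∧
      ∀ x y, (finRotate (m + 1) * α).SameCycle x y)).card : ℤ)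
    = sg N (m + 1) + ∑ c ∈ Finset.range m, ((c : ℤ) + 1) * (sg N c * ic N (m - 1 - c)) := by
  set ζ := finRotate (m + 1) with hζ
  -- double counting
  have h1 : ∑ x : Fin (m + 1), ∑ α ∈ Finset.univ.filter (fun α : Perm (Fin (m + 1)) => IsInv α),
      ∑ S ∈ Finset.univ.filter (fun S : Finset (Fin (m + 1)) =>
        x ∈ S ∧ ∀ y, (ζ * α) y ∈ S ↔ y ∈ S), w (ζ * α) S
      = ∑ S : Finset (Fin (m + 1)), (S.card : ℤ) * F ζ S := by
    have hS : ∀ S : Finset (Fin (m + 1)), (S.card : ℤ) * F ζ S =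
        ∑ x : Fin (m + 1), ∑ α ∈ Finset.univ.filter (fun α : Perm (Fin (m + 1)) => IsInv α),
          if x ∈ S ∧ ∀ y, (ζ * α) y ∈ S ↔ y ∈ S then w (ζ * α) S else 0 := by
      intro S
      rw [F, ← Finset.filter_filter, Finset.sum_filter
        (s := Finset.univ.filter (fun α : Perm (Fin (m + 1)) => IsInv α)),
        Finset.mul_sum, Finset.sum_comm]
      apply Finset.sum_congr rfl
      intro α _
      by_cases hP : ∀ y, (ζ * α) y ∈ S ↔ y ∈ S
      · simp only [hP, implies_true, if_true, and_true]
        rw [← Finset.sum_filter, Finset.sum_const, nsmul_eq_mul]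
        simp
      · simp only [hP, and_false, if_false, mul_zero, Finset.sum_const_zero]
    rw [Finset.sum_congr rfl (fun S _ => hS S)]
    symm
    rw [Finset.sum_comm]
    apply Finset.sum_congr rfl
    intro x _
    rw [Finset.sum_comm]
    apply Finset.sum_congr rfl
    intro α _
    rw [Finset.sum_filter]
  have h2 : ∑ x : Fin (m + 1), ∑ α ∈ Finset.univ.filter (fun α : Perm (Fin (m + 1)) => IsInv α),
      ∑ S ∈ Finset.univ.filter (fun S : Finset (Fin (m + 1)) =>
        x ∈ S ∧ ∀ y, (ζ * α) y ∈ S ↔ y ∈ S), w (ζ * α) S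
      = - (((m : ℤ) + 1) * ((Finset.univ.filter (fun α : Perm (Fin (m + 1)) => IsInv α ∧
      ∀ x y, (ζ * α).SameCycle x y)).card : ℤ)) := by
    rw [Finset.sum_congr rfl (fun x _ => Finset.sum_congr rfl
      (g := fun α => if ∀ a b, (ζ * α).SameCycle a b then (-1 : ℤ) else 0) (fun α _ => by
        have := part1 (ζ * α) x
        convert this))]
    rw [Finset.sum_const, ← Finset.sum_filter, Finset.filter_filter, Finset.sum_const]
    simp
  have h3 : ∑ S : Finset (Fin (m + 1)), (S.card : ℤ) * F ζ S
      = (m + 1) * F ζ Finset.univ +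
        ∑ p ∈ (Finset.univ : Finset (Fin (m + 1))) ×ˢ Finset.range m,
          (((itv p.1 p.2).card : ℤ) * F ζ (itv p.1 p.2)) := by
    have hinj : Set.InjOn (fun p : Fin (m + 1) × ℕ => itv p.1 p.2)
        (((Finset.univ : Finset (Fin (m + 1))) ×ˢ Finset.range m : Finset _) : Set _) := by
      rintro ⟨e, c⟩ h ⟨e', c'⟩ h' heq
      simp only [Finset.coe_product, Set.mem_prod, Finset.mem_coe, Finset.mem_range] at h h'
      dsimp only at heq
      have hcc : c = c' := by
        have := congrArg Finset.card heq
        rw [card_itv e (by omega), card_itv e' (by omega)] at this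
        omega
      subst hcc
      have he : e ∈ itv e c := by simp [mem_itv]
      have hz : finRotate (m + 1) e ∉ itv e c := by
        rw [mem_itv, vsub, if_pos rfl]; omega
      rw [heq] at he hz
      rw [rot_mem h'.2] at hz
      have : e = e' := by
        by_contra hc; exact hz (Or.inl ⟨he, hc⟩)
      rw [this]
    rw [← Finset.sum_image (f := fun S : Finset (Fin (m + 1)) => (S.card : ℤ) * F ζ S) hinj]
    have hnot : (Finset.univ : Finset (Fin (m + 1))) ∉
        Finset.image (fun p : Fin (m + 1) × ℕ => itv p.1 p.2)
        ((Finset.univ : Finset (Fin (m + 1))) ×ˢ Finset.range m) := by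
      intro h
      obtain ⟨⟨e, c⟩, hp, h⟩ := Finset.mem_image.1 h
      simp only [Finset.mem_product, Finset.mem_range] at hp
      have := congrArg Finset.card h
      rw [card_itv _ (by omega), Finset.card_univ, Fintype.card_fin] at this
      omega
    have := Finset.sum_insert (f := fun S : Finset (Fin (m + 1)) => (S.card : ℤ) * F ζ S) hnot
    simp only [Finset.card_univ, Fintype.card_fin] at this
    push_cast at this
    rw [← this]
    symm
    apply Finset.sum_subset (Finset.subset_univ _)
    intro S _ hS
    by_contra hc
    apply hS
    rw [Finset.mem_insert]
    by_cases hu : S = Finset.univ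
    · exact Or.inl hu
    · right
      obtain ⟨e, c, hcm, rfl⟩ := classify S (by
        rw [Finset.nonempty_iff_ne_empty]; rintro rfl; simp at hc) hu
        (right_ne_zero_of_mul hc)
      exact Finset.mem_image.2 ⟨(e, c), by simpa using hcm, rfl⟩
  rw [Finset.sum_product, Finset.sum_congr rfl (fun e _ => Finset.sum_congr rfl
    (g := fun c : ℕ => -(((c : ℤ) + 1) * (sg N c * ic N (m - 1 - c)))) (fun c hc => by
      rw [Finset.mem_range] at hc
      rw [F_itv e c N hc hN, card_itv e (by omega)]; push_cast; ring)),
    F_univ N hN, Finset.sum_const, Finset.card_univ, Fintype.card_fin,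
    Finset.sum_neg_distrib] at h3
  rw [h2, h3, nsmul_eq_mul] at h1
  have hm : ((m : ℤ) + 1) ≠ 0 := by positivity
  apply mul_left_cancel₀ hm
  push_cast at h1
  linear_combination -h1

end cyclic

section numeric

lemma conv_choose (a b : ℕ) : ∀ n : ℕ,
    ∑ c ∈ Finset.range (n + 1), c.choose a * (n - c).choose b = (n + 1).choose (a + b + 1) := by
  induction b with
  | zero =>
    intro n
    simp only [Nat.choose_zero_right, mul_one, add_zero]
    induction n with
    | zero =>
      cases a with
      | zero => simp
      | succ a => rw [Nat.choose_eq_zero_of_lt (by omega : 0 + 1 < a + 1 + 1)]; simp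
    | succ k ih => rw [Finset.sum_range_succ, ih, Nat.choose_succ_succ (k + 1) a]; ring
  | succ b ihb =>
    intro n
    induction n with
    | zero => rw [Nat.choose_eq_zero_of_lt (by omega : 0 + 1 < a + (b + 1) + 1)]; simp
    | succ k ih =>
      rw [Finset.sum_range_succ, Nat.sub_self, Nat.choose_zero_succ, mul_zero, add_zero]
      rw [show a + (b + 1) + 1 = (a + b + 1) + 1 by ring, Nat.choose_succ_succ (k + 1), ← ihb k,
        show (a + b + 1).succ = a + (b + 1) + 1 by simp; ring, ← ih, ← Finset.sum_add_distrib]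
      apply Finset.sum_congr rfl
      intro c hc
      rw [Finset.mem_range] at hc
      rw [show k + 1 - c = (k - c) + 1 by omega, Nat.choose_succ_succ]
      ring

lemma conv_term (m j l : ℕ) :
    ∑ c ∈ Finset.range m, (c + 1) * (c.choose (2 * j) * (m - 1 - c).choose (2 * l))
      = (2 * j + 1) * (m + 1).choose (2 * (j + l + 1)) := by
  have h := conv_choose (2 * j + 1) (2 * l) m
  rw [Finset.sum_range_succ'] at h
  simp only [Nat.choose_zero_succ, zero_mul, add_zero] at h
  rw [show 2 * (j + l + 1) = 2 * j + 1 + 2 * l + 1 by ring, ← h, Finset.mul_sum]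
  apply Finset.sum_congr rfl
  intro c _
  have := Nat.add_one_mul_choose_eq c (2 * j)
  rw [show m - (c + 1) = m - 1 - c by omega, ← mul_assoc, this]; ring

/-- alternating convolution -/
def T (k : ℕ) : ℤ := ∑ j ∈ Finset.range (k + 1), (-1) ^ j * ((2 * j + 1) * d j) * d (k - j)

lemma T_tel (k p : ℕ) (hp : p ≤ k + 1) :
    (2 * k + 4) * ∑ j ∈ Finset.range p, (-1 : ℤ) ^ j * ((2 * j + 1) * d j) * d (k - j)
      = d (k + 1) - (-1) ^ p * d (p + 1) * d (k + 1 - p) := by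
  induction p with
  | zero => simp [d]
  | succ p ih =>
    rw [Finset.sum_range_succ, mul_add, ih (by omega)]
    obtain ⟨r, rfl⟩ : ∃ r, k = p + r := ⟨k - p, by omega⟩
    rw [show p + r - p = r by omega, show p + r + 1 - p = r + 1 by omega,
      show p + r + 1 - (p + 1) = r by omega]
    rw [show d (p + 1 + 1) = (2 * (p + 1) + 1) * ((2 * p + 1) * d p) from rfl,
      show d (p + 1) = (2 * p + 1) * d p from rfl, show d (r + 1) = (2 * r + 1) * d r from rfl]
    push_cast
    rw [_root_.pow_succ]
    ring

/-- the coefficients -/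
def E : ℕ → ℤ
  | 0 => 1
  | k + 1 => (-1) ^ (k + 1) * d (k + 1) + T k

lemma E_eq (M : ℕ) : 2 * ((M : ℤ) + 1) * E M = d M * (1 + (-1) ^ M) := by
  cases M with
  | zero => simp [E, d]
  | succ k =>
    have := T_tel k (k + 1) le_rfl
    rw [← T, Nat.sub_self, show d (k + 1 + 1) = (2 * (k + 1) + 1) * d (k + 1) from rfl,
      show d 0 = 1 from rfl] at this
    rw [E]
    push_cast at this ⊢
    linear_combination this

lemma E_odd (i : ℕ) : E (2 * i + 1) = 0 := by
  have := E_eq (2 * i + 1)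
  rw [_root_.pow_succ, pow_mul] at this
  simp at this
  rcases this with h | h
  · omega
  · exact h

lemma E_even (i : ℕ) : (((4 * i)! / (4 ^ i * (2 * i + 1)!) : ℕ) : ℤ) = E (2 * i) := by
  have h := E_eq (2 * i)
  rw [pow_mul] at h
  simp at h
  have h1 : (2 * (i : ℤ) + 1) * E (2 * i) = d (2 * i) := by linarith
  have h0 : 0 ≤ E (2 * i) := by
    have : 0 ≤ (2 * (i : ℤ) + 1) * E (2 * i) := by rw [h1]; positivity
    exact nonneg_of_mul_nonneg_right this (by positivity)
  obtain ⟨e, he⟩ := Int.eq_ofNat_of_zero_le h0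
  rw [he] at h1 ⊢
  have h2 : (2 * i + 1) * e = d (2 * i) := by exact_mod_cast h1
  congr 1
  apply Nat.div_eq_of_eq_mul_left (by positivity)
  rw [show 4 * i = 2 * (2 * i) by ring, d_fact (2 * i), ← h2, Nat.factorial_succ, pow_mul]
  norm_num
  ring

lemma regroup (n N : ℕ) (hN : n < 2 * N) (g : ℕ → ℕ → ℤ) :
    ∑ j ∈ Finset.range N, ∑ l ∈ Finset.range N, g j l * n.choose (2 * (j + l + 1))
      = ∑ k ∈ Finset.range N, n.choose (2 * (k + 1)) * ∑ j ∈ Finset.range (k + 1), g j (k - j) := by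
  have h := Finset.sum_range_diag_flip N (fun j l => g j l * (n.choose (2 * (j + l + 1)) : ℤ))
  have h2 : ∀ j ∈ Finset.range N,
      ∑ l ∈ Finset.range N, g j l * (n.choose (2 * (j + l + 1)) : ℤ)
      = ∑ l ∈ Finset.range (N - j), g j l * (n.choose (2 * (j + l + 1)) : ℤ) := by
    intro j _
    symm
    apply Finset.sum_subset (by intro x; simp; omega)
    intro l _ hl
    rw [Finset.mem_range] at hl
    rw [Nat.choose_eq_zero_of_lt (by omega)]; simp
  rw [Finset.sum_congr rfl h2, ← h]
  apply Finset.sum_congr rfl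
  intro k _
  rw [Finset.mul_sum]
  apply Finset.sum_congr rfl
  intro j hj
  rw [Finset.mem_range] at hj
  rw [show j + (k - j) = k by omega]; ring

lemma final_sum (m N : ℕ) (hN : m + 1 < N) :
    sg N (m + 1) + ∑ c ∈ Finset.range m, ((c : ℤ) + 1) * (sg N c * ic N (m - 1 - c))
      = ∑ M ∈ Finset.range N, ((m + 1).choose (2 * M) : ℤ) * E M := by
  have h1 : ∑ c ∈ Finset.range m, ((c : ℤ) + 1) * (sg N c * ic N (m - 1 - c))
      = ∑ j ∈ Finset.range N, ∑ l ∈ Finset.range N,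
        ((-1) ^ j * ((2 * j + 1) * d j) * d l : ℤ) * (m + 1).choose (2 * (j + l + 1)) := by
    simp_rw [sg, ic, Finset.sum_mul_sum, Finset.mul_sum]
    rw [Finset.sum_comm]
    apply Finset.sum_congr rfl
    intro j _
    rw [Finset.sum_comm]
    apply Finset.sum_congr rfl
    intro l _
    have := congrArg (Nat.cast : ℕ → ℤ) (conv_term m j l)
    push_cast at this
    have h2 : ((-1) ^ j * ((2 * j + 1) * d j) * d l : ℤ) * (m + 1).choose (2 * (j + l + 1))
      = ((-1) ^ j * d j * d l : ℤ) * ((2 * j + 1) * (m + 1).choose (2 * (j + l + 1))) := by ring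
    rw [h2, ← this, Finset.mul_sum]
    apply Finset.sum_congr rfl
    intro c _
    push_cast
    ring
  rw [h1, regroup (m + 1) N (by omega)
    (fun j l => ((-1) ^ j * ((2 * j + 1) * d j) * d l : ℤ))]
  obtain ⟨K, rfl⟩ : ∃ K, N = K + 1 := ⟨N - 1, by omega⟩
  rw [sg, Finset.sum_range_succ',
    Finset.sum_range_succ' (fun M => ((m + 1).choose (2 * M) : ℤ) * E M),
    Finset.sum_range_succ (fun k => ((m + 1).choose (2 * (k + 1)) : ℤ) *
      ∑ j ∈ Finset.range (k + 1), ((-1) ^ j * ((2 * j + 1) * d j) * d (k - j) : ℤ))]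
  rw [Nat.choose_eq_zero_of_lt (show m + 1 < 2 * (K + 1) by omega)]
  have : ∀ k ∈ Finset.range K, ((m + 1).choose (2 * (k + 1)) : ℤ) * E (k + 1)
      = (-1) ^ (k + 1) * ((m + 1).choose (2 * (k + 1)) * d (k + 1) : ℕ) +
        (m + 1).choose (2 * (k + 1)) * ∑ j ∈ Finset.range (k + 1),
          ((-1) ^ j * ((2 * j + 1) * d j) * d (k - j) : ℤ) := by
    intro k _
    rw [E, T]; push_cast; ring
  rw [Finset.sum_congr rfl this, Finset.sum_add_distrib]
  simp [E, d]
  ring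

lemma sum_even_odd (f : ℕ → ℤ) (K : ℕ) :
    ∑ M ∈ Finset.range (2 * K), f M
      = ∑ i ∈ Finset.range K, (f (2 * i) + f (2 * i + 1)) := by
  induction K with
  | zero => simp
  | succ K ih =>
    rw [show 2 * (K + 1) = 2 * K + 1 + 1 by ring, Finset.sum_range_succ, Finset.sum_range_succ, ih,
      Finset.sum_range_succ]; ring

end numeric

end QD

/-- Let `n ≥ 1` and write `n = 4t + q` with `0 ≤ q ≤ 3`.  Then the number
of maximal quasi-diagrams in `S_n`, i.e. of involutions `α` of `Fin n` such that
`ζ_n α` (`ζ = finRotate n`) has exactly one orbit, equals `Σ_{i=0}^{t} C(n, 4i) ε_i`, where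
`ε_i = (4i)! / (4^i * (2i+1)!)` (so `ε_0 = 1`). -/
theorem stmt_19 (n t q : ℕ) (hn : 0 < n) (hq : q ≤ 3) (hdec : n = 4 * t + q) :
    Nat.card {α : Equiv.Perm (Fin n) //
        (∀ i, α (α i) = i) ∧
          ∀ x y : Fin n, (finRotate n * α).SameCycle x y} =
      ∑ i ∈ Finset.range (t + 1),
        n.choose (4 * i) * ((4 * i)! / (4 ^ i * (2 * i + 1)!)) := by
  classical
  obtain ⟨m, rfl⟩ : ∃ m, n = m + 1 := ⟨n - 1, by omega⟩
  have h1 := QD.main_count (m := m) (2 * (m + 2)) (by omega)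
  rw [QD.final_sum m _ (by omega), QD.sum_even_odd] at h1
  rw [Nat.card_eq_fintype_card, Fintype.card_subtype]
  zify
  refine Eq.trans ?_ (h1.trans ?_)
  · congr 2
    ext α
    rw [Finset.mem_filter, Finset.mem_filter]
    rfl
  · symm
    have : ∀ i ∈ Finset.range (m + 2),
        (((m + 1).choose (2 * (2 * i)) : ℤ) * QD.E (2 * i) +
          ((m + 1).choose (2 * (2 * i + 1)) : ℤ) * QD.E (2 * i + 1))
        = ((m + 1).choose (4 * i) * ((4 * i)! / (4 ^ i * (2 * i + 1)!) : ℕ) : ℤ) := by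
      intro i _
      rw [QD.E_odd, QD.E_even, show 2 * (2 * i) = 4 * i by ring]; ring
    rw [Finset.sum_congr rfl this]
    push_cast
    apply Finset.sum_subset (by intro x; simp; omega)
    intro i _ hi
    rw [Finset.mem_range] at hi
    rw [Nat.choose_eq_zero_of_lt (by omega)]; simp
end
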